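/- (Relative Stallings' theorem.) Let φ : H → Out(A) be a monomorphism with H finite, let A = A_1 ∗ ⋯ ∗ A_n ∗ B be a free product decomposition with each A_i and B finitely generated, and suppose the decomposition is preserved by H. Let Ā be the preimage of φ(H) in Aut(A). Then Ā splits over a finite subgroup in such a way that each A_i is elliptic: there is a tree T on which Ā acts without inversions, with a single Ā-orbit of edges, with every edge stabilizer finite, with no vertex fixed by all of Ā, and such that for each i ≤ n the subgroup A_i (viewed inside Ā via A ≅ Inn(A)) fixes a vertex of T. -/

import Mathlib

/-! # Relative Stallings' theorem (Hensel–Kielak, Theorem 3 / `prop: relative splitting`) -/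

variable (A : Type*) [Group A]

/-- The subgroup of inner automorphisms of `A`, inside `MulAut A`. -/
abbrev Inn : Subgroup (MulAut A) := (MulAut.conj (G := A)).range

instance Inn_normal : (Inn A).Normal := by
  constructor
  rintro x ⟨a, rfl⟩ f
  exact ⟨f a, by ext x; simp [mul_assoc]⟩

/-- The outer automorphism group of `A`. -/
abbrev OutG := MulAut A ⧸ Inn A

/-- The canonical projection `Aut(A) → Out(A)`. -/
abbrev toOut : MulAut A →* OutG A := QuotientGroup.mk' (Inn A)

/-!
The proof follows Dunwoody's "cutting up graphs", in the form given by Krön.  In the free product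
`A`, the set of reduced words whose first letter lies in a fixed nontrivial factor is infinite and
co-infinite, and it is almost equal to a union of left cosets of each factor, hence to each of its
right translates.  As `Ā` contains `A` with finite index and permutes the conjugates of the factors
`A_i`, pulling this set back along a coset decomposition of `Ā` gives an almost invariant subset of
`Ā` that is almost equal to a union of left cosets of each `A_i`.  Extended to the cone points, it
becomes a set of vertices with finite coboundary in the Cayley graph of `Ā` coned off along the
cosets of the `A_i`.  Among the cuts with the fewest edges, one crossing as few others as possible
is nested with all of its translates.  These translates and their complements are the oriented edges
of a tree, whose edge stabilizers are finite because the coboundaries are, and in which a subgroup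
fixing a vertex of the graph fixes a vertex.  Inverted edges are subdivided.
-/

open Filter
open scoped Pointwise

universe w

/-! ### Splittings over finite subgroups -/

/-- An action on the vertices of a graph by graph automorphisms. -/
class IsGraphAction (G : Type*) {V : Type*} [SMul G V] (X : SimpleGraph V) : Prop where
  adj_smul_iff : ∀ (g : G) {u v : V}, X.Adj (g • u) (g • v) ↔ X.Adj u v

/-- The tree `T` exhibits a nontrivial one-edge splitting of `G` over a finite subgroup, in the
sense of Bass–Serre theory. -/
structure IsFiniteSplitting (G : Type*) [Group G] {W : Type*} [MulAction G W]
    (T : SimpleGraph W) : Prop extends IsGraphAction G T where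
  isTree : T.IsTree
  not_inversion : ∀ (g : G) {u v : W}, T.Adj u v → ¬(g • u = v ∧ g • v = u)
  exists_smul_edge : ∀ {u v x y : W}, T.Adj u v → T.Adj x y →
    ∃ g : G, (g • u = x ∧ g • v = y) ∨ (g • u = y ∧ g • v = x)
  finite_edge_stabilizer : ∀ {u v : W}, T.Adj u v → {g : G | g • u = u ∧ g • v = v}.Finite
  no_fixed_vertex : ¬ ∃ w : W, ∀ g : G, g • w = w

/-- `G` splits over a finite subgroup in such a way that every `L k` is elliptic. -/
def HasFiniteSplitting.{u, v} (G : Type u) [Group G] {κ : Type v} (L : κ → Subgroup G) : Prop :=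
  ∃ (W : Type w) (_ : MulAction G W) (T : SimpleGraph W),
    IsFiniteSplitting G T ∧ ∀ k, ∃ w : W, L k ≤ MulAction.stabilizer G w

section Splitting

variable {G W : Type*} [Group G] [MulAction G W] {T : SimpleGraph W}

theorem IsFiniteSplitting.comap {W' : Type*} [MulAction G W'] (hT : IsFiniteSplitting G T)
    (f : W' ≃ W) (hf : ∀ (g : G) (x : W'), f (g • x) = g • f x) :
    IsFiniteSplitting G (T.comap f) where
  adj_smul_iff g u v := by simp only [SimpleGraph.comap_adj, hf, hT.adj_smul_iff]
  isTree := (SimpleGraph.Iso.comap f T).isTree_iff.2 hT.isTree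
  not_inversion g u v h := by
    simpa only [← f.injective.eq_iff, hf] using hT.not_inversion g h
  exists_smul_edge h h' := by
    simpa only [← f.injective.eq_iff, hf] using hT.exists_smul_edge h h'
  finite_edge_stabilizer h := by
    simpa only [← f.injective.eq_iff, hf] using hT.finite_edge_stabilizer h
  no_fixed_vertex := by
    rintro ⟨x, hx⟩
    exact hT.no_fixed_vertex ⟨f x, fun g => by rw [← hf, hx]⟩

theorem IsFiniteSplitting.small [Small.{w} G] (hT : IsFiniteSplitting G T) : Small.{w} W := by
  obtain ⟨x⟩ := hT.isTree.connected.nonempty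
  obtain ⟨g, hg⟩ : ∃ g : G, g • x ≠ x := by
    by_contra! h
    exact hT.no_fixed_vertex ⟨x, h⟩
  have : Nontrivial W := ⟨⟨_, _, hg⟩⟩
  have hadj := hT.isTree.connected.preconnected.exists_adj_of_nontrivial
  obtain ⟨y, hxy⟩ := hadj x
  refine small_of_surjective (f := Sum.elim (fun g : G => g • x) fun g : G => g • y) fun z => ?_
  obtain ⟨z', hz⟩ := hadj z
  obtain ⟨g, ⟨h, -⟩ | ⟨-, h⟩⟩ := hT.exists_smul_edge hxy hz
  exacts [⟨.inl g, h⟩, ⟨.inr g, h⟩]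

theorem HasFiniteSplitting.resize.{v} [Small.{w} G] {κ : Type*} {L : κ → Subgroup G}
    (h : HasFiniteSplitting.{v} G L) : HasFiniteSplitting.{w} G L := by
  obtain ⟨W, _, T, hT, hL⟩ := h
  have := hT.small
  refine ⟨Shrink.{w} W, inferInstance, _, hT.comap (equivShrink W).symm equivShrink_symm_smul,
    fun k => ?_⟩
  obtain ⟨x, hx⟩ := hL k
  refine ⟨equivShrink W x, fun g hg => (equivShrink W).symm.injective ?_⟩
  rw [equivShrink_symm_smul, Equiv.symm_apply_apply, hx hg]

end Splitting

/-! ### Tree sets -/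

/-- A partial order with an order-reversing involution in which any two elements are nested and all
intervals are finite: the oriented edges of a tree, `x ≤ y` meaning that some path traverses `x` and
later `y`, and `xᶜ` being the reverse of `x`. -/
class IsTreeSet (P : Type*) [PartialOrder P] [Compl P] : Prop where
  compl_involutive : Function.Involutive (compl : P → P)
  compl_antitone : Antitone (compl : P → P)
  nested : ∀ x y : P, x ≤ y ∨ x ≤ yᶜ ∨ xᶜ ≤ y ∨ xᶜ ≤ yᶜ
  not_le_compl : ∀ {x y : P}, x ≤ y → ¬ x ≤ yᶜ
  finite_Icc : ∀ x y : P, (Set.Icc x y).Finite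

namespace IsTreeSet

variable {P : Type*} [PartialOrder P] [Compl P] {x y : P} {O O' : Set P}

/-- A choice of one element from each pair `x`, `xᶜ`, closed upwards.  The orientations with a
minimal element correspond to the vertices of the tree: they point away from the vertex. -/
structure IsOrientation (O : Set P) : Prop where
  compl_mem_iff : ∀ x, xᶜ ∈ O ↔ x ∉ O
  isUpperSet : IsUpperSet O

theorem IsOrientation.eq_of_subset (hO : IsOrientation O) (hO' : IsOrientation O') (h : O ⊆ O') :
    O = O' := by
  refine h.antisymm fun x hx => ?_
  by_contra hxO
  exact (hO'.compl_mem_iff x).1 (h ((hO.compl_mem_iff x).2 hxO)) hx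

/-- The orientation pointing away from the source of `x`. -/
def vertexSet (x : P) : Set P := {y | x ≤ y ∨ xᶜ < y}

theorem self_mem_vertexSet (x : P) : x ∈ vertexSet x := Or.inl le_rfl

variable (P) in
/-- The vertices of the tree of a tree set, as orientations. -/
def Vertex : Type _ := Set.range (vertexSet : P → Set P)

/-- The source of an oriented edge. -/
def vertex (x : P) : Vertex P := ⟨vertexSet x, x, rfl⟩

theorem vertex_surjective : Function.Surjective (vertex : P → Vertex P) := by
  rintro ⟨_, x, rfl⟩
  exact ⟨x, rfl⟩

theorem vertex_eq_iff : vertex x = vertex y ↔ vertexSet x = vertexSet y := Subtype.ext_iff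

variable [IsTreeSet P]

@[simp]
theorem compl_compl_eq (x : P) : xᶜᶜ = x := compl_involutive x

theorem compl_le_comm : xᶜ ≤ y ↔ yᶜ ≤ x :=
  ⟨fun h => by simpa using compl_antitone h, fun h => by simpa using compl_antitone h⟩

theorem le_compl_comm : x ≤ yᶜ ↔ y ≤ xᶜ :=
  ⟨fun h => by simpa using compl_antitone h, fun h => by simpa using compl_antitone h⟩

theorem not_compl_le (h : x ≤ y) : ¬ xᶜ ≤ y := fun h' =>
  not_le_compl (compl_le_comm.1 h') (compl_antitone h)

theorem isOrientation_vertexSet (x : P) : IsOrientation (vertexSet x) where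
  compl_mem_iff y := by
    constructor
    · rintro (h | h) (h' | h')
      · exact not_le_compl h' h
      · exact h'.not_ge (le_compl_comm.1 h)
      · exact h.not_ge (compl_antitone h')
      · exact not_le_compl h'.le h.le
    · intro hy
      obtain ⟨hxy, hxy'⟩ := not_or.1 hy
      rcases nested x y with h | h | h | h
      · exact absurd h hxy
      · exact Or.inl h
      · rw [← h.eq_of_not_lt hxy', compl_compl_eq]
        exact Or.inl le_rfl
      · refine Or.inr (h.lt_of_ne fun h' => hxy ?_)
        exact (compl_involutive.injective h').le
  isUpperSet _ _ hyz h := h.imp (fun h => h.trans hyz) fun h => h.trans_le hyz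

theorem compl_notMem_vertexSet (x : P) : xᶜ ∉ vertexSet x := fun h =>
  ((isOrientation_vertexSet x).compl_mem_iff x).1 h (self_mem_vertexSet x)

theorem notMem_vertexSet_compl (x : P) : x ∉ vertexSet xᶜ := by
  simpa using compl_notMem_vertexSet xᶜ

theorem eq_of_mem_vertexSet_of_notMem (h : x ∈ vertexSet y) (h' : x ∉ vertexSet yᶜ) : y = x := by
  obtain ⟨h₁, h₂⟩ := not_or.1 h'
  rw [compl_compl_eq] at h₂
  exact (h.resolve_right fun h => h₁ h.le).eq_of_not_lt h₂

theorem IsOrientation.eq_vertexSet (hO : IsOrientation O) (hx : Minimal (· ∈ O) x) :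
    O = vertexSet x := by
  refine hO.eq_of_subset (isOrientation_vertexSet x) fun y hy => ?_
  rcases nested x y with h | h | h | h
  · exact Or.inl h
  · exact absurd hy ((hO.compl_mem_iff y).1 (hO.isUpperSet h hx.prop))
  · refine Or.inr (h.lt_of_ne ?_)
    rintro rfl
    exact (hO.compl_mem_iff x).1 hy hx.prop
  · exact Or.inl (hx.le_of_le hy (by simpa using compl_antitone h))

theorem vertexSet_compl_of_covBy (h : x ⋖ y) : vertexSet xᶜ = vertexSet y := by
  refine (isOrientation_vertexSet xᶜ).eq_vertexSet ⟨Or.inr (by simpa using h.lt), ?_⟩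
  rintro z (hz | hz) hzy
  · exact absurd (hz.trans hzy) (not_compl_le h.le)
  · rw [compl_compl_eq] at hz
    exact (hzy.eq_of_not_lt fun hzy => h.2 hz hzy).ge

theorem eq_of_vertex_eq (h : vertex x = vertex y) (h' : vertex xᶜ = vertex yᶜ) : x = y := by
  rw [vertex_eq_iff] at h h'
  exact eq_of_mem_vertexSet_of_notMem (h ▸ self_mem_vertexSet y) (h' ▸ notMem_vertexSet_compl y)

variable (P) in
/-- The tree whose oriented edges are the elements of a tree set. -/
def tree : SimpleGraph (Vertex P) where
  Adj u v := ∃ x, vertex x = u ∧ vertex xᶜ = v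
  symm := ⟨by
    rintro _ _ ⟨x, rfl, rfl⟩
    exact ⟨xᶜ, rfl, by rw [compl_compl_eq]⟩⟩
  loopless := ⟨by
    rintro _ ⟨x, rfl, h⟩
    exact notMem_vertexSet_compl x (vertex_eq_iff.1 h ▸ self_mem_vertexSet x)⟩

theorem tree_adj_vertex (x : P) : (tree P).Adj (vertex x) (vertex xᶜ) := ⟨x, rfl, rfl⟩

theorem tree_reachable_of_le (h : x ≤ y) : (tree P).Reachable (vertex x) (vertex y) := by
  let _ : LocallyFiniteOrder P := .ofFiniteIcc finite_Icc
  induction le_iff_reflTransGen_covBy.1 h with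
  | refl => rfl
  | @tail y z hxy hyz ih =>
    refine (ih (le_iff_reflTransGen_covBy.2 hxy)).trans ?_
    rw [← vertex_eq_iff.2 (vertexSet_compl_of_covBy hyz)]
    exact (tree_adj_vertex y).reachable

theorem tree_preconnected : (tree P).Preconnected := by
  intro u v
  obtain ⟨x, rfl⟩ := vertex_surjective u
  obtain ⟨y, rfl⟩ := vertex_surjective v
  have hx := (tree_adj_vertex x).reachable
  have hy := (tree_adj_vertex y).reachable.symm
  rcases nested x y with h | h | h | h
  · exact tree_reachable_of_le h
  · exact (tree_reachable_of_le h).trans hy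
  · exact hx.trans (tree_reachable_of_le h)
  · exact hx.trans ((tree_reachable_of_le h).trans hy)

theorem tree_isAcyclic : (tree P).IsAcyclic := by
  rw [SimpleGraph.isAcyclic_iff_forall_adj_isBridge]
  rintro _ _ ⟨x, rfl, rfl⟩
  rw [SimpleGraph.isBridge_iff]
  rintro ⟨p⟩
  -- The edge `x` is the only one along which membership of `x` in an orientation changes.
  obtain ⟨⟨⟨_, _⟩, hadj⟩, -, hin, hout⟩ := p.exists_boundary_dart {u | x ∈ u.1}
    (self_mem_vertexSet x) (notMem_vertexSet_compl x)
  rw [SimpleGraph.deleteEdges_adj] at hadj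
  obtain ⟨⟨y, rfl, rfl⟩, hne⟩ := hadj
  exact hne (eq_of_mem_vertexSet_of_notMem hin hout ▸ rfl)

theorem isTree_tree [Nonempty P] : (tree P).IsTree where
  connected :=
    { preconnected := tree_preconnected
      nonempty := ⟨vertex (Classical.arbitrary P)⟩ }
  isAcyclic := tree_isAcyclic

end IsTreeSet

/-- An action by order automorphisms commuting with the involution. -/
class IsTreeSetAction (G P : Type*) [SMul G P] [PartialOrder P] [Compl P] : Prop where
  smul_mono : ∀ g : G, Monotone (g • · : P → P)
  smul_compl : ∀ (g : G) (x : P), g • xᶜ = (g • x)ᶜ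

/-- An action on a tree set which induces a splitting over a finite subgroup; the last condition
excludes a global fixed vertex. -/
class IsSplittingAction (G P : Type*) [Group G] [MulAction G P] [PartialOrder P] [Compl P] :
    Prop extends IsTreeSetAction G P where
  exists_smul_eq_or : ∀ x y : P, ∃ g : G, g • x = y ∨ g • x = yᶜ
  finite_stabilizer : ∀ x : P, {g : G | g • x = x}.Finite
  exists_lt_smul_or : ∀ x : P, ∃ g : G, x < g • x ∨ x < (g • x)ᶜ

namespace IsTreeSet

variable {G P : Type*} [Group G] [PartialOrder P] [Compl P] [MulAction G P]

theorem smul_le_smul_iff' [IsTreeSetAction G P] (g : G) {x y : P} : g • x ≤ g • y ↔ x ≤ y :=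
  ⟨fun h => by simpa using IsTreeSetAction.smul_mono g⁻¹ h, fun h => IsTreeSetAction.smul_mono g h⟩

theorem smul_lt_smul_iff' [IsTreeSetAction G P] (g : G) {x y : P} : g • x < g • y ↔ x < y := by
  simp only [lt_iff_le_not_ge, smul_le_smul_iff']

theorem smul_vertexSet [IsTreeSetAction G P] (g : G) (x : P) :
    g • vertexSet x = vertexSet (g • x) := by
  ext y
  rw [Set.mem_smul_set_iff_inv_smul_mem]
  change x ≤ g⁻¹ • y ∨ xᶜ < g⁻¹ • y ↔ g • x ≤ y ∨ (g • x)ᶜ < y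
  rw [← smul_le_smul_iff' g, ← smul_lt_smul_iff' g, IsTreeSetAction.smul_compl, smul_inv_smul]

instance [IsTreeSetAction G P] : MulAction G (Vertex P) where
  smul g u := ⟨g • u.1, by
    obtain ⟨_, x, rfl⟩ := u
    exact ⟨g • x, (smul_vertexSet g x).symm⟩⟩
  one_smul u := Subtype.ext (one_smul G u.1)
  mul_smul g h u := Subtype.ext (mul_smul g h u.1)

theorem smul_vertex [IsTreeSetAction G P] (g : G) (x : P) : g • vertex x = vertex (g • x) :=
  Subtype.ext (smul_vertexSet g x)

variable [IsTreeSet P]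

instance [IsTreeSetAction G P] : IsGraphAction G (tree P) where
  adj_smul_iff g u v := by
    have smul_adj (g : G) {u v : Vertex P} : (tree P).Adj u v → (tree P).Adj (g • u) (g • v) := by
      rintro ⟨x, rfl, rfl⟩
      rw [smul_vertex, smul_vertex, IsTreeSetAction.smul_compl]
      exact tree_adj_vertex _
    exact ⟨fun h => by simpa using smul_adj g⁻¹ h, smul_adj g⟩

theorem exists_smul_vertex_ne [IsTreeSetAction G P] {x : P}
    (h : ∃ g : G, x < g • x ∨ x < (g • x)ᶜ) : ∃ g : G, g • vertex x ≠ vertex x := by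
  by_contra! hfix
  have hmem (g : G) : g • x ∈ vertexSet x := by
    rw [← vertex_eq_iff.1 ((smul_vertex g x).symm.trans (hfix g))]
    exact self_mem_vertexSet _
  obtain ⟨g, hg | hg⟩ := h
  · have hg' : g⁻¹ • x < x := by rwa [← smul_lt_smul_iff' g, smul_inv_smul]
    rcases hmem g⁻¹ with h | h
    · exact h.not_gt hg'
    · exact not_compl_le le_rfl (h.trans hg').le
  · rcases hmem g with h | h
    · exact not_le_compl h hg.le
    · exact h.not_ge (le_compl_comm.1 hg.le)

theorem isFiniteSplitting_tree [IsSplittingAction G P] [Nonempty P]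
    (hinv : ∀ (g : G) (x : P), g • x ≠ xᶜ) : IsFiniteSplitting G (tree P) where
  isTree := isTree_tree
  not_inversion := by
    rintro g _ _ ⟨x, rfl, rfl⟩ ⟨h₁, h₂⟩
    rw [smul_vertex] at h₁ h₂
    refine hinv g x (eq_of_vertex_eq h₁ ?_)
    rw [← IsTreeSetAction.smul_compl, h₂, compl_compl_eq]
  exists_smul_edge := by
    rintro _ _ _ _ ⟨x, rfl, rfl⟩ ⟨y, rfl, rfl⟩
    obtain ⟨g, hg⟩ := IsSplittingAction.exists_smul_eq_or (G := G) x y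
    refine ⟨g, hg.imp (fun hg => ?_) fun hg => ?_⟩ <;>
      simp only [smul_vertex, IsTreeSetAction.smul_compl, hg, compl_compl_eq, and_self]
  finite_edge_stabilizer := by
    rintro _ _ ⟨x, rfl, rfl⟩
    refine (IsSplittingAction.finite_stabilizer x).subset fun g ⟨h₁, h₂⟩ => ?_
    rw [smul_vertex] at h₁ h₂
    exact eq_of_vertex_eq h₁ (by rw [← IsTreeSetAction.smul_compl, h₂])
  no_fixed_vertex := by
    rintro ⟨u, hu⟩
    obtain ⟨x, rfl⟩ := vertex_surjective u
    obtain ⟨g, hg⟩ := exists_smul_vertex_ne (IsSplittingAction.exists_lt_smul_or (G := G) x)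
    exact hg (hu g)

/-- The subgroup `L` fixes a vertex of the tree, given as an orientation with a minimal element. -/
def FixesVertex (P : Type*) [PartialOrder P] [Compl P] [MulAction G P] (L : Subgroup G) : Prop :=
  ∃ O : Set P, IsOrientation O ∧ (∃ x, Minimal (· ∈ O) x) ∧ ∀ g ∈ L, g • O = O

theorem FixesVertex.exists_le_stabilizer [IsTreeSetAction G P] {L : Subgroup G}
    (h : FixesVertex P L) : ∃ u : Vertex P, L ≤ MulAction.stabilizer G u := by
  obtain ⟨O, hO, ⟨x, hx⟩, hL⟩ := h
  obtain rfl := hO.eq_vertexSet hx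
  exact ⟨vertex x, fun g hg => Subtype.ext (hL g hg)⟩

end IsTreeSet

/-! ### Inversions -/

/-- The tree set obtained by subdividing every edge: `⟨x, false⟩` and `⟨x, true⟩` are the first and
the second half of `x`.  A group acting on `P` acts on it without inversions. -/
structure Subdivision (P : Type*) where
  edge : P
  isSecond : Bool

namespace Subdivision

variable {G P : Type*}

theorem toLex_injective :
    Function.Injective fun p : Subdivision P => toLex (p.edge, p.isSecond) := by
  rintro ⟨x, i⟩ ⟨y, j⟩ h
  obtain ⟨rfl, rfl⟩ := Prod.mk_inj.1 (toLex_inj.1 h)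
  rfl

instance [PartialOrder P] : PartialOrder (Subdivision P) := .lift _ toLex_injective

instance [Nonempty P] : Nonempty (Subdivision P) := ⟨⟨Classical.arbitrary P, false⟩⟩

instance [Compl P] : Compl (Subdivision P) := ⟨fun p => ⟨p.edgeᶜ, !p.isSecond⟩⟩

instance [Monoid G] [MulAction G P] : MulAction G (Subdivision P) where
  smul g p := ⟨g • p.edge, p.isSecond⟩
  one_smul p := congrArg (mk · p.isSecond) (one_smul G p.edge)
  mul_smul g h p := congrArg (mk · p.isSecond) (mul_smul g h p.edge)

theorem compl_mk [Compl P] (x : P) (i : Bool) : (mk x i)ᶜ = mk xᶜ !i := rfl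

variable [PartialOrder P] {x y : P} {i j : Bool}

theorem mk_le_mk : mk x i ≤ mk y j ↔ x < y ∨ x = y ∧ i ≤ j := Prod.Lex.toLex_le_toLex

theorem mk_lt_mk_of_lt (h : x < y) : mk x i < mk y j := Prod.Lex.toLex_lt_toLex.2 (.inl h)

theorem monotone_edge : Monotone (edge : Subdivision P → P) := fun _ _ h =>
  (mk_le_mk.1 h).elim le_of_lt fun h => h.1.le

variable [Compl P]

theorem mk_le_mk_or (i j : Bool) (h : x ≤ y) : mk x i ≤ mk y j ∨ (mk x i)ᶜ ≤ (mk y j)ᶜ := by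
  rcases h.eq_or_lt with rfl | h
  · cases i <;> cases j <;> simp [compl_mk, mk_le_mk]
  · exact Or.inl (mk_lt_mk_of_lt h).le

instance [IsTreeSet P] : IsTreeSet (Subdivision P) where
  compl_involutive p := by
    rw [compl_mk, compl_mk, IsTreeSet.compl_compl_eq, Bool.not_not]
  compl_antitone := by
    rintro ⟨x, i⟩ ⟨y, j⟩ h
    rcases mk_le_mk.1 h with hxy | ⟨rfl, hij⟩
    · refine (mk_lt_mk_of_lt ((IsTreeSet.compl_antitone hxy.le).lt_of_ne fun h' => ?_)).le
      exact hxy.ne' (IsTreeSet.compl_involutive.injective h')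
    · exact mk_le_mk.2 (.inr ⟨rfl, compl_le_compl hij⟩)
  nested := by
    rintro ⟨x, i⟩ ⟨y, j⟩
    have hx := IsTreeSet.compl_compl_eq x
    have hy := IsTreeSet.compl_compl_eq y
    rcases IsTreeSet.nested x y with h | h | h | h
    · have := mk_le_mk_or i j h
      tauto
    · have := mk_le_mk_or i (!j) h
      simp only [compl_mk, hy, Bool.not_not] at this
      tauto
    · have := mk_le_mk_or (!i) j h
      simp only [compl_mk, hx, Bool.not_not] at this
      tauto
    · have := mk_le_mk_or (!i) (!j) h
      simp only [compl_mk, hx, hy, Bool.not_not] at this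
      tauto
  not_le_compl h h' := IsTreeSet.not_le_compl (monotone_edge h) (monotone_edge h')
  finite_Icc p q := by
    refine (((IsTreeSet.finite_Icc p.edge q.edge).prod Set.finite_univ).image
      fun p => mk p.1 p.2).subset fun r hr => ?_
    exact ⟨(r.edge, r.isSecond), ⟨⟨monotone_edge hr.1, monotone_edge hr.2⟩, trivial⟩, rfl⟩

variable [Group G] [MulAction G P]

instance [IsTreeSetAction G P] : IsTreeSetAction G (Subdivision P) where
  smul_mono g p q h := by
    refine mk_le_mk.2 ((mk_le_mk.1 h).imp (IsTreeSet.smul_lt_smul_iff' g).2 ?_)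
    exact And.imp_left (congrArg (g • ·))
  smul_compl g p := congrArg (mk · !p.isSecond) (IsTreeSetAction.smul_compl g p.edge)

theorem isSplittingAction [IsSplittingAction G P] (htrans : ∀ x y : P, ∃ g : G, g • x = y) :
    IsSplittingAction G (Subdivision P) where
  exists_smul_eq_or := by
    rintro ⟨x, i⟩ ⟨y, j⟩
    rcases Bool.eq_or_eq_not i j with rfl | rfl
    · obtain ⟨g, hg⟩ := htrans x y
      exact ⟨g, .inl (congrArg (mk · i) hg)⟩
    · obtain ⟨g, hg⟩ := htrans x yᶜ
      exact ⟨g, .inr (congrArg (mk · !j) hg)⟩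
  finite_stabilizer p :=
    (IsSplittingAction.finite_stabilizer p.edge).subset fun _ hg => congrArg edge hg
  exists_lt_smul_or p := by
    obtain ⟨g, hg⟩ := IsSplittingAction.exists_lt_smul_or (G := G) p.edge
    exact ⟨g, hg.imp mk_lt_mk_of_lt mk_lt_mk_of_lt⟩

omit [PartialOrder P] in
theorem smul_ne_compl (g : G) (p : Subdivision P) : g • p ≠ pᶜ := fun h =>
  Bool.not_ne_self p.isSecond (congrArg isSecond h).symm

theorem fixesVertex {L : Subgroup G} (h : IsTreeSet.FixesVertex P L) :
    IsTreeSet.FixesVertex (Subdivision P) L := by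
  obtain ⟨O, hO, ⟨x, hx⟩, hL⟩ := h
  refine ⟨edge ⁻¹' O, ⟨fun p => hO.compl_mem_iff p.edge, hO.isUpperSet.preimage monotone_edge⟩,
    ⟨⟨x, false⟩, hx.prop, ?_⟩, fun g hg => ?_⟩
  · rintro ⟨y, j⟩ hy hyx
    obtain rfl : x = y := hx.eq_of_ge hy (monotone_edge hyx)
    exact mk_le_mk.2 (.inr ⟨rfl, Bool.false_le j⟩)
  · ext p
    rw [Set.mem_smul_set_iff_inv_smul_mem]
    change g⁻¹ • p.edge ∈ O ↔ p.edge ∈ O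
    rw [← Set.mem_smul_set_iff_inv_smul_mem, hL g hg]

end Subdivision

namespace IsTreeSet

variable {G : Type*} {P : Type w} [Group G] [PartialOrder P] [Compl P] [MulAction G P]
  [IsTreeSet P] [IsSplittingAction G P]

theorem exists_smul_eq_of_inversion {g₀ : G} {x₀ : P} (h : g₀ • x₀ = x₀ᶜ) (x y : P) :
    ∃ g : G, g • x = y := by
  have exists_smul_eq (z : P) : ∃ g : G, g • x₀ = z := by
    obtain ⟨g, hg | hg⟩ := IsSplittingAction.exists_smul_eq_or (G := G) x₀ z
    · exact ⟨g, hg⟩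
    · exact ⟨g * g₀, by rw [mul_smul, h, IsTreeSetAction.smul_compl, hg, compl_compl_eq]⟩
  obtain ⟨g, rfl⟩ := exists_smul_eq x
  obtain ⟨h, rfl⟩ := exists_smul_eq y
  exact ⟨h * g⁻¹, by rw [mul_smul, inv_smul_smul]⟩

theorem hasFiniteSplitting_of_forall_smul_ne_compl [Nonempty P]
    (hinv : ∀ (g : G) (x : P), g • x ≠ xᶜ) {κ : Type*} {L : κ → Subgroup G}
    (hL : ∀ k, FixesVertex P (L k)) : HasFiniteSplitting.{w} G L :=
  ⟨Vertex P, inferInstance, tree P, isFiniteSplitting_tree hinv,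
    fun k => (hL k).exists_le_stabilizer⟩

theorem hasFiniteSplitting [Nonempty P] {κ : Type*} {L : κ → Subgroup G}
    (hL : ∀ k, FixesVertex P (L k)) : HasFiniteSplitting.{w} G L := by
  by_cases hinv : ∃ (g : G) (x : P), g • x = xᶜ
  · obtain ⟨g, x, h⟩ := hinv
    have := Subdivision.isSplittingAction (exists_smul_eq_of_inversion h)
    exact hasFiniteSplitting_of_forall_smul_ne_compl Subdivision.smul_ne_compl
      fun k => Subdivision.fixesVertex (hL k)
  · push Not at hinv
    exact hasFiniteSplitting_of_forall_smul_ne_compl hinv hL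

end IsTreeSet

/-! ### Edge cuts of graphs -/

section Coboundary

variable {V : Type*} {X : SimpleGraph V} {C D : Set V}

/-- The edges of `X` between `C` and its complement, each of them listed in both directions. -/
def coboundary (X : SimpleGraph V) (C : Set V) : Set (V × V) :=
  {e | X.Adj e.1 e.2 ∧ ¬(e.1 ∈ C ↔ e.2 ∈ C)}

theorem coboundary_compl (X : SimpleGraph V) (C : Set V) : coboundary X Cᶜ = coboundary X C := by
  simp only [coboundary, Set.mem_compl_iff, not_iff_not]

theorem coboundary_inter_union_union_subset (X : SimpleGraph V) (C D : Set V) :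
    coboundary X (C ∩ D) ∪ coboundary X (C ∪ D) ⊆ coboundary X C ∪ coboundary X D := by
  rintro e (⟨hadj, h⟩ | ⟨hadj, h⟩) <;>
  · simp only [coboundary, Set.mem_union, Set.mem_inter_iff, Set.mem_ofPred_eq] at *
    tauto

theorem coboundary_inter_inter_union_subset (X : SimpleGraph V) (C D : Set V) :
    coboundary X (C ∩ D) ∩ coboundary X (C ∪ D) ⊆ coboundary X C ∩ coboundary X D := by
  rintro e ⟨⟨hadj, h⟩, -, h'⟩
  simp only [coboundary, Set.mem_union, Set.mem_inter_iff, Set.mem_ofPred_eq] at *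
  tauto

theorem exists_dart_mem_coboundary {x y : V} (p : X.Walk x y) (hx : x ∈ C) (hy : y ∉ C) :
    ∃ d ∈ p.darts, d.toProd ∈ coboundary X C := by
  obtain ⟨d, hd, h₁, h₂⟩ := p.exists_boundary_dart C hx hy
  exact ⟨d, hd, d.adj, fun h => h₂ (h.1 h₁)⟩

theorem coboundary_nonempty (hX : X.Preconnected) (hC : C.Nonempty) (hC' : Cᶜ.Nonempty) :
    (coboundary X C).Nonempty := by
  obtain ⟨x, hx⟩ := hC
  obtain ⟨y, hy⟩ := hC'
  obtain ⟨p⟩ := hX x y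
  obtain ⟨d, -, hd⟩ := exists_dart_mem_coboundary p hx hy
  exact ⟨_, hd⟩

theorem preconnected_induce_iff : (X.induce C).Preconnected ↔
    ∀ D : Set V, (∀ e ∈ coboundary X D, e.1 ∈ C → e.2 ∉ C) → C ⊆ D ∨ C ⊆ Dᶜ := by
  constructor
  · intro hC D hD
    by_contra! h
    obtain ⟨⟨x, hx, hxD⟩, y, hy, hyD⟩ := And.imp Set.not_subset.1 Set.not_subset.1 h
    obtain ⟨d, -, h₁, h₂⟩ :=
      (hC ⟨y, hy⟩ ⟨x, hx⟩).some.exists_boundary_dart (Subtype.val ⁻¹' D) (not_not.1 hyD) hxD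
    exact hD (d.fst.1, d.snd.1) ⟨d.adj, fun h => h₂ (h.1 h₁)⟩ d.fst.2 d.snd.2
  · intro h x y
    have hclosed : ∀ e ∈ coboundary X (Subtype.val '' {z | (X.induce C).Reachable x z}),
        e.1 ∈ C → e.2 ∉ C := by
      rintro ⟨u, v⟩ ⟨huv, hne⟩ hu hv
      have huv' : (X.induce C).Adj ⟨u, hu⟩ ⟨v, hv⟩ := huv
      refine hne ⟨?_, ?_⟩
      · rintro ⟨z, hz, rfl⟩
        exact ⟨⟨v, hv⟩, hz.trans huv'.reachable, rfl⟩
      · rintro ⟨z, hz, rfl⟩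
        exact ⟨⟨u, hu⟩, hz.trans huv'.symm.reachable, rfl⟩
    rcases h _ hclosed with h | h
    · obtain ⟨z, hz, hzy⟩ := h y.2
      exact Subtype.ext hzy ▸ hz
    · exact absurd ⟨x, .refl x, rfl⟩ (h x.2)

theorem induce_deleteEdges_eq {e : V × V} (he : ¬(e.1 ∈ C ↔ e.2 ∈ C)) :
    (X.deleteEdges {s(e.1, e.2)}).induce C = X.induce C := by
  ext ⟨u, hu⟩ ⟨v, hv⟩
  rw [SimpleGraph.induce_adj, SimpleGraph.induce_adj, SimpleGraph.deleteEdges_adj,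
    Set.mem_singleton_iff, and_iff_left_iff_imp]
  rintro - h
  rcases Sym2.eq_iff.1 h with ⟨rfl, rfl⟩ | ⟨rfl, rfl⟩
  · exact he (iff_of_true hu hv)
  · exact he (iff_of_true hv hu)

theorem coboundary_deleteEdges_ssubset {e : V × V} (he : e ∈ coboundary X C) :
    coboundary (X.deleteEdges {s(e.1, e.2)}) C ⊂ coboundary X C :=
  ⟨fun _ h => ⟨(SimpleGraph.deleteEdges_adj.1 h.1).1, h.2⟩,
    fun h => (SimpleGraph.deleteEdges_adj.1 (h he).1).2 rfl⟩

theorem eq_setOf_reachable {x y : V} (hxy : ¬ X.Reachable x y) (hC : (X.induce C).Preconnected)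
    (hC' : (X.induce Cᶜ).Preconnected) (hx : x ∈ C) (hy : y ∉ C) : C = {v | X.Reachable x v} := by
  have closed (e) (he : e ∈ coboundary X {v | X.Reachable x v}) : False :=
    he.2 ⟨fun h => h.trans he.1.reachable, fun h => h.trans he.1.symm.reachable⟩
  have hsub := preconnected_induce_iff.1 hC _ fun e he => (closed e he).elim
  have hsub' := preconnected_induce_iff.1 hC' _ fun e he => (closed e he).elim
  refine (hsub.resolve_right fun h => h hx (.refl x)).antisymm ?_
  exact Set.compl_subset_compl.1 (hsub'.resolve_left fun h => hxy (h hy))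

-- Induction on `k`: an edge of the bond lies on a fixed path from `x` to `y`, and may be deleted.
theorem finite_setOf_bond_separating (k : ℕ) (X : SimpleGraph V) (x y : V) :
    {C : Set V | x ∈ C ∧ y ∉ C ∧ (X.induce C).Preconnected ∧ (X.induce Cᶜ).Preconnected ∧
      (coboundary X C).encard ≤ k}.Finite := by
  induction k generalizing X x y with
  | zero =>
    by_cases hxy : X.Reachable x y
    · refine Set.finite_empty.subset fun C ⟨hx, hy, _, _, hk⟩ => ?_
      obtain ⟨d, -, hd⟩ := exists_dart_mem_coboundary hxy.some hx hy
      rw [Nat.cast_zero, nonpos_iff_eq_zero, Set.encard_eq_zero] at hk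
      exact (hk ▸ hd : _ ∈ (∅ : Set (V × V)))
    · exact (Set.finite_singleton _).subset fun C ⟨hx, hy, hC, hC', _⟩ =>
        eq_setOf_reachable hxy hC hC' hx hy
  | succ k ih =>
    by_cases hxy : X.Reachable x y
    · obtain ⟨p⟩ := hxy
      refine (p.darts.finite_toSet.biUnion fun d _ =>
        ih (X.deleteEdges {s(d.fst, d.snd)}) d.fst d.snd).subset fun C ⟨hx, hy, hC, hC', hk⟩ => ?_
      obtain ⟨d, hd, h₁, h₂⟩ := p.exists_boundary_dart C hx hy
      have hsep : ¬(d.fst ∈ C ↔ d.snd ∈ C) := fun h => h₂ (h.1 h₁)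
      have hfin : (coboundary X C).Finite := Set.finite_of_encard_le_coe hk
      have hss := coboundary_deleteEdges_ssubset (X := X) (e := d.toProd) ⟨d.adj, hsep⟩
      refine Set.mem_biUnion hd ⟨h₁, h₂, ?_, ?_, ?_⟩
      · rwa [induce_deleteEdges_eq hsep]
      · rwa [induce_deleteEdges_eq (not_iff_not.not.2 hsep)]
      · have hlt := ((hfin.subset hss.subset).encard_lt_encard hss).trans_le hk
        exact ENat.lt_natCast_add_one_iff.1 (by exact_mod_cast hlt)
    · exact (Set.finite_singleton _).subset fun C ⟨hx, hy, hC, hC', _⟩ =>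
        eq_setOf_reachable hxy hC hC' hx hy

theorem ncard_add_ncard_le {α : Type*} {s t u v : Set α} (hu : u.Finite) (hv : v.Finite)
    (hunion : s ∪ t ⊆ u ∪ v) (hinter : s ∩ t ⊆ u ∩ v) :
    s.ncard + t.ncard ≤ u.ncard + v.ncard := by
  have hst := (hu.union hv).subset hunion
  rw [← Set.ncard_union_add_ncard_inter u v hu hv, ← Set.ncard_union_add_ncard_inter s t
    (hst.subset Set.subset_union_left) (hst.subset Set.subset_union_right)]
  exact add_le_add (Set.ncard_le_ncard hunion (hu.union hv))
    (Set.ncard_le_ncard hinter (hu.inter_of_left v))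

theorem ncard_add_ncard_lt {α : Type*} {s t u v : Set α} (hu : u.Finite) (hv : v.Finite)
    (hunion : s ∪ t ⊂ u ∪ v) (hinter : s ∩ t ⊆ u ∩ v) :
    s.ncard + t.ncard < u.ncard + v.ncard := by
  have hst := (hu.union hv).subset hunion.subset
  rw [← Set.ncard_union_add_ncard_inter u v hu hv, ← Set.ncard_union_add_ncard_inter s t
    (hst.subset Set.subset_union_left) (hst.subset Set.subset_union_right)]
  exact add_lt_add_of_lt_of_le (Set.ncard_lt_ncard hunion (hu.union hv))
    (Set.ncard_le_ncard hinter (hu.inter_of_left v))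

end Coboundary

/-- Two sets are nested if one of the four intersections of each of them or its complement with
the other or its complement is empty. -/
def Nested {V : Type*} (C D : Set V) : Prop := C ⊆ D ∨ C ⊆ Dᶜ ∨ Cᶜ ⊆ D ∨ Cᶜ ⊆ Dᶜ

namespace Nested

variable {V : Type*} {C D E : Set V}

theorem symm (h : Nested C D) : Nested D C := by
  rcases h with h | h | h | h
  · exact .inr (.inr (.inr (Set.compl_subset_compl.2 h)))
  · exact .inr (.inl (Set.subset_compl_comm.1 h))
  · exact .inr (.inr (.inl (Set.compl_subset_comm.1 h)))
  · exact .inl (Set.compl_subset_compl.1 h)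

theorem compl_right_iff : Nested C Dᶜ ↔ Nested C D := by
  simp only [Nested, compl_compl]
  tauto

theorem compl_left_iff : Nested Cᶜ D ↔ Nested C D := by
  simp only [Nested, compl_compl]
  tauto

theorem smul_iff {G : Type*} [Group G] [MulAction G V] (g : G) :
    Nested (g • C) (g • D) ↔ Nested C D := by
  simp only [Nested, ← Set.smul_set_compl, Set.smul_set_subset_smul_set_iff]

theorem ssubset_or {p q : V} (h : Nested C D) (hpC : p ∉ C) (hpD : p ∈ D) (hqC : q ∉ C)
    (hqD : q ∉ D) : C ⊂ D ∨ C ⊂ Dᶜ := by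
  rcases h with h | h | h | h
  · exact .inl ⟨h, fun h' => hpC (h' hpD)⟩
  · exact .inr ⟨h, fun h' => hqC (h' hqD)⟩
  · exact absurd (h hqC) hqD
  · exact absurd hpD (h hpC)

theorem inter_or_union (h : Nested C E) : Nested (C ∩ D) E ∨ Nested (C ∪ D) E := by
  rcases h with h | h | h | h
  · exact .inl (.inl (Set.inter_subset_left.trans h))
  · exact .inl (.inr (.inl (Set.inter_subset_left.trans h)))
  · exact .inr (.inr (.inr (.inl ((Set.compl_subset_compl.2 Set.subset_union_left).trans h))))
  · exact .inr (.inr (.inr (.inr ((Set.compl_subset_compl.2 Set.subset_union_left).trans h))))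

theorem inter (h : Nested C E) (h' : Nested D E) (hCD : ¬ Nested C D) : Nested (C ∩ D) E := by
  rcases h with h | h | h | h
  · exact .inl (Set.inter_subset_left.trans h)
  · exact .inr (.inl (Set.inter_subset_left.trans h))
  all_goals rcases h' with h' | h' | h' | h'
  · exact .inl (Set.inter_subset_right.trans h')
  · exact .inr (.inl (Set.inter_subset_right.trans h'))
  · exact .inr (.inr (.inl (Set.compl_inter C D ▸ Set.union_subset h h')))
  · exact absurd (.inr (.inr (.inl (h.trans (Set.compl_subset_compl.1 h'))))) hCD
  · exact .inl (Set.inter_subset_right.trans h')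
  · exact .inr (.inl (Set.inter_subset_right.trans h'))
  · exact absurd (.inr (.inr (.inl (h.trans (Set.compl_subset_comm.1 h'))))) hCD
  · exact .inr (.inr (.inr (Set.compl_inter C D ▸ Set.union_subset h h')))

theorem union (h : Nested C E) (h' : Nested D E) (hCD : ¬ Nested C D) : Nested (C ∪ D) E := by
  rw [← compl_left_iff, Set.compl_union]
  exact (compl_left_iff.2 h).inter (compl_left_iff.2 h')
    (by rwa [compl_left_iff, compl_right_iff])

end Nested

/-! ### Minimal and optimal cuts -/

section Cuts

variable {V : Type*} {X : SimpleGraph V} {l : Filter V} {C D E : Set V}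

/-- A cut of `X` relative to `l`: only finitely many edges leave `C`, and neither `C` nor its
complement is negligible for `l`. -/
structure IsCut (X : SimpleGraph V) (l : Filter V) (C : Set V) : Prop where
  finite_coboundary : (coboundary X C).Finite
  frequently_mem : ∃ᶠ v in l, v ∈ C
  frequently_notMem : ∃ᶠ v in l, v ∉ C

/-- A cut with the least possible number of edges. -/
structure IsMinCut (X : SimpleGraph V) (l : Filter V) (C : Set V) : Prop extends IsCut X l C where
  ncard_le : ∀ D, IsCut X l D → (coboundary X C).ncard ≤ (coboundary X D).ncard

/-- The minimal cuts that are not nested with `C`. -/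
def crossing (X : SimpleGraph V) (l : Filter V) (C : Set V) : Set (Set V) :=
  {E | IsMinCut X l E ∧ ¬ Nested C E}

/-- A minimal cut crossing as few minimal cuts as possible. -/
structure IsOptimalCut (X : SimpleGraph V) (l : Filter V) (C : Set V) : Prop
    extends IsMinCut X l C where
  ncard_crossing_le : ∀ D, IsMinCut X l D → (crossing X l C).ncard ≤ (crossing X l D).ncard

theorem frequently_mem_inter_or (h : ∃ᶠ v in l, v ∈ C) (D : Set V) :
    (∃ᶠ v in l, v ∈ C ∩ D) ∨ ∃ᶠ v in l, v ∈ C ∩ Dᶜ :=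
  frequently_or_distrib.1 (h.mono fun v hv => (em (v ∈ D)).imp (⟨hv, ·⟩) (⟨hv, ·⟩))

theorem IsCut.exists_isMinCut (h : IsCut X l C) : ∃ D, IsMinCut X l D := by
  obtain ⟨D, hD, hmin⟩ := exists_minimalFor_of_wellFoundedLT (IsCut X l)
    (fun D => (coboundary X D).ncard) ⟨C, h⟩
  exact ⟨D, hD, fun E hE => (le_total _ _).elim id (hmin hE)⟩

theorem IsCut.exists_isOptimalCut (h : IsCut X l C) : ∃ D, IsOptimalCut X l D := by
  obtain ⟨D, hD, hmin⟩ := exists_minimalFor_of_wellFoundedLT (IsMinCut X l)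
    (fun D => (crossing X l D).ncard) h.exists_isMinCut
  exact ⟨D, hD, fun E hE => (le_total _ _).elim id (hmin hE)⟩

theorem IsCut.compl (h : IsCut X l C) : IsCut X l Cᶜ :=
  ⟨by rw [coboundary_compl]; exact h.finite_coboundary, h.frequently_notMem,
    by simpa only [Set.mem_compl_iff, not_not] using h.frequently_mem⟩

theorem IsMinCut.compl (h : IsMinCut X l C) : IsMinCut X l Cᶜ :=
  ⟨h.toIsCut.compl, by rw [coboundary_compl]; exact h.ncard_le⟩

theorem IsOptimalCut.compl (h : IsOptimalCut X l C) : IsOptimalCut X l Cᶜ :=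
  ⟨h.toIsMinCut.compl, by
    simpa only [crossing, Nested.compl_left_iff] using h.ncard_crossing_le⟩

section Translation

variable {G : Type*} [Group G] [MulAction G V] [IsGraphAction G X]

theorem coboundary_smul (g : G) (C : Set V) : coboundary X (g • C) = g • coboundary X C := by
  ext ⟨u, v⟩
  simp only [Set.mem_smul_set_iff_inv_smul_mem, coboundary, Set.mem_ofPred_eq, Prod.smul_mk,
    IsGraphAction.adj_smul_iff]

theorem IsCut.smul (hl : ∀ g : G, Tendsto (g • ·) l l) (g : G) (h : IsCut X l C) :
    IsCut X l (g • C) where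
  finite_coboundary := coboundary_smul (X := X) g C ▸ h.finite_coboundary.smul_set
  frequently_mem := (hl g).frequently <| by
    simpa only [Set.smul_mem_smul_set_iff] using h.frequently_mem
  frequently_notMem := (hl g).frequently <| by
    simpa only [Set.smul_mem_smul_set_iff] using h.frequently_notMem

theorem IsMinCut.smul (hl : ∀ g : G, Tendsto (g • ·) l l) (g : G) (h : IsMinCut X l C) :
    IsMinCut X l (g • C) :=
  ⟨h.toIsCut.smul hl g, by rw [coboundary_smul, Set.ncard_smul_set]; exact h.ncard_le⟩

theorem crossing_smul (hl : ∀ g : G, Tendsto (g • ·) l l) (g : G) (C : Set V) :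
    crossing X l (g • C) = g • crossing X l C := by
  ext E
  rw [Set.mem_smul_set_iff_inv_smul_mem]
  refine and_congr ⟨fun h => h.smul hl _, fun h => ?_⟩ ?_
  · simpa only [smul_inv_smul] using h.smul hl g
  · rw [← Nested.smul_iff g⁻¹, inv_smul_smul]

theorem IsOptimalCut.smul (hl : ∀ g : G, Tendsto (g • ·) l l) (g : G) (h : IsOptimalCut X l C) :
    IsOptimalCut X l (g • C) :=
  ⟨h.toIsMinCut.smul hl g, by
    rw [crossing_smul hl, Set.ncard_smul_set]; exact h.ncard_crossing_le⟩

end Translation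

theorem coboundary_inter_subset (h : ∀ e ∈ coboundary X D, e.1 ∈ C → e.2 ∉ C) :
    coboundary X (C ∩ D) ⊆ coboundary X C := by
  rintro e ⟨hadj, he⟩
  have := h e
  simp only [coboundary, Set.mem_inter_iff, Set.mem_ofPred_eq] at *
  tauto

theorem IsMinCut.subset_of_frequently (hX : X.Preconnected) (hC : IsMinCut X l C)
    (hD : ∀ e ∈ coboundary X D, e.1 ∈ C → e.2 ∉ C) (hfreq : ∃ᶠ v in l, v ∈ C ∩ D) : C ⊆ D := by
  have hsub := coboundary_inter_subset hD
  have hcut : IsCut X l (C ∩ D) := ⟨hC.finite_coboundary.subset hsub, hfreq,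
    hC.frequently_notMem.mono fun _ h h' => h h'.1⟩
  have heq := Set.eq_of_subset_of_ncard_le hsub (hC.ncard_le _ hcut) hC.finite_coboundary
  by_contra hCD
  obtain ⟨x, hx, hxD⟩ := Set.not_subset.1 hCD
  obtain ⟨y, hy⟩ := hC.frequently_notMem.exists
  obtain ⟨e, he⟩ := coboundary_nonempty (C := C ∩ Dᶜ) hX ⟨x, hx, hxD⟩ ⟨y, fun h => hy h.1⟩
  have heC : e ∈ coboundary X C := coboundary_inter_subset (coboundary_compl X D ▸ hD) he
  have heD : e ∈ coboundary X (C ∩ D) := heq ▸ heC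
  simp only [coboundary, Set.mem_inter_iff, Set.mem_compl_iff, Set.mem_ofPred_eq] at he heC heD
  tauto

theorem IsMinCut.preconnected_induce (hX : X.Preconnected) (hC : IsMinCut X l C) :
    (X.induce C).Preconnected := by
  refine preconnected_induce_iff.2 fun D hD => ?_
  exact (frequently_mem_inter_or hC.frequently_mem D).imp (hC.subset_of_frequently hX hD)
    (hC.subset_of_frequently hX (coboundary_compl X D ▸ hD))

theorem finite_setOf_isMinCut_separating (hX : X.Preconnected) (l : Filter V) (x y : V) :
    {C | IsMinCut X l C ∧ x ∈ C ∧ y ∉ C}.Finite := by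
  by_cases hne : ∃ C, IsMinCut X l C
  · obtain ⟨C₀, hC₀⟩ := hne
    refine (finite_setOf_bond_separating (coboundary X C₀).ncard X x y).subset ?_
    rintro C ⟨hC, hx, hy⟩
    refine ⟨hx, hy, hC.preconnected_induce hX, hC.compl.preconnected_induce hX, ?_⟩
    rw [← hC.finite_coboundary.cast_ncard_eq]
    exact_mod_cast hC.ncard_le _ hC₀.toIsCut
  · exact Set.finite_empty.subset fun C hC => hne ⟨C, hC.1⟩

theorem exists_mem_coboundary_of_not_nested (hX : X.Preconnected) (hE : IsMinCut X l E)
    (h : ¬ Nested C E) : ∃ e ∈ coboundary X C, e.1 ∈ E := by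
  by_contra! hout
  refine h (Nested.symm ?_)
  rcases preconnected_induce_iff.1 (hE.preconnected_induce hX) C
    (fun e he h => absurd h (hout e he)) with h | h
  exacts [.inl h, .inr (.inl h)]

-- A connected set crossing `C` contains an end of some edge of the finite coboundary of `C`.
theorem finite_crossing (hX : X.Preconnected) (l : Filter V) (hC : (coboundary X C).Finite) :
    (crossing X l C).Finite := by
  refine (hC.biUnion fun p _ => hC.biUnion fun q _ =>
    finite_setOf_isMinCut_separating hX l p.1 q.1).subset ?_
  rintro E ⟨hE, hn⟩
  obtain ⟨p, hp, hpE⟩ := exists_mem_coboundary_of_not_nested hX hE hn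
  obtain ⟨q, hq, hqE⟩ := exists_mem_coboundary_of_not_nested hX hE.compl
    (Nested.compl_right_iff.not.2 hn)
  exact Set.mem_biUnion hp (Set.mem_biUnion hq ⟨hE, hpE, hqE⟩)

theorem IsMinCut.inter_union (hC : IsMinCut X l C) (hD : IsMinCut X l D)
    (h : ∃ᶠ v in l, v ∈ C ∩ D) (h' : ∃ᶠ v in l, v ∉ C ∪ D) :
    IsMinCut X l (C ∩ D) ∧ IsMinCut X l (C ∪ D) := by
  have hsub := coboundary_inter_union_union_subset X C D
  have hfin := (hC.finite_coboundary.union hD.finite_coboundary).subset hsub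
  have hinter : IsCut X l (C ∩ D) :=
    ⟨hfin.subset Set.subset_union_left, h, h'.mono fun _ hv hv' => hv (.inl hv'.1)⟩
  have hunion : IsCut X l (C ∪ D) :=
    ⟨hfin.subset Set.subset_union_right, h.mono fun _ hv => .inl hv.1, h'⟩
  have hsum := ncard_add_ncard_le hC.finite_coboundary hD.finite_coboundary hsub
    (coboundary_inter_inter_union_subset X C D)
  have := hC.ncard_le _ hinter
  have := hC.ncard_le _ hunion
  have := hD.ncard_le _ hC.toIsCut
  exact ⟨⟨hinter, fun E hE => by have := hC.ncard_le _ hE; lia⟩,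
    ⟨hunion, fun E hE => by have := hC.ncard_le _ hE; lia⟩⟩

theorem ncard_crossing_inter_add_union_lt (hX : X.Preconnected) (hC : IsMinCut X l C)
    (hD : IsMinCut X l D) (hCD : ¬ Nested C D) :
    (crossing X l (C ∩ D)).ncard + (crossing X l (C ∪ D)).ncard <
      (crossing X l C).ncard + (crossing X l D).ncard := by
  refine ncard_add_ncard_lt (finite_crossing hX l hC.finite_coboundary)
    (finite_crossing hX l hD.finite_coboundary) ⟨?_, fun hsub => ?_⟩ ?_
  · rintro E hE
    by_contra! hn
    simp only [crossing, Set.mem_union, Set.mem_ofPred_eq, not_or, not_and, not_not] at hn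
    rcases hE with hE | hE
    · exact hE.2 ((hn.1 hE.1).inter (hn.2 hE.1) hCD)
    · exact hE.2 ((hn.1 hE.1).union (hn.2 hE.1) hCD)
  · rcases hsub (.inr ⟨hC, fun h => hCD h.symm⟩) with h | h
    · exact h.2 (.inl Set.inter_subset_left)
    · exact h.2 (Nested.symm (.inl Set.subset_union_left))
  · rintro E ⟨⟨hE, hinter⟩, -, hunion⟩
    refine ⟨⟨hE, fun h => ?_⟩, hE, fun h => ?_⟩
    · exact (h.inter_or_union (D := D)).elim hinter hunion
    · rw [Set.inter_comm] at hinter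
      rw [Set.union_comm] at hunion
      exact (h.inter_or_union (D := C)).elim hinter hunion

theorem IsOptimalCut.nested_of_frequently (hX : X.Preconnected) (hC : IsOptimalCut X l C)
    (hD : IsOptimalCut X l D) (h : ∃ᶠ v in l, v ∈ C ∩ D) (h' : ∃ᶠ v in l, v ∉ C ∪ D) :
    Nested C D := by
  by_contra hn
  obtain ⟨hinter, hunion⟩ := hC.inter_union hD.toIsMinCut h h'
  have hlt := ncard_crossing_inter_add_union_lt hX hC.toIsMinCut hD.toIsMinCut hn
  exact hlt.not_ge
    (add_le_add (hC.ncard_crossing_le _ hinter) (hD.ncard_crossing_le _ hunion))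

theorem IsOptimalCut.nested (hX : X.Preconnected) (hC : IsOptimalCut X l C)
    (hD : IsOptimalCut X l D) : Nested C D := by
  by_cases h : (∃ᶠ v in l, v ∈ C ∩ D) ∧ ∃ᶠ v in l, v ∉ C ∪ D
  · exact hC.nested_of_frequently hX hD h.1 h.2
  · have hC₁ := frequently_mem_inter_or hC.frequently_mem D
    have hC₂ := frequently_mem_inter_or hC.compl.frequently_mem D
    have hD₁ := frequently_mem_inter_or hD.frequently_mem C
    have hD₂ := frequently_mem_inter_or hD.compl.frequently_mem C
    rw [← Nested.compl_right_iff]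
    refine hC.nested_of_frequently hX hD.compl ?_ ?_ <;>
    · simp only [Set.mem_inter_iff, Set.mem_union, Set.mem_compl_iff, not_or, not_not,
        and_comm] at *
      tauto

end Cuts

/-! ### Splittings from cuts -/

section CutOrbit

variable {G : Type*} {V : Type w} [Group G] [MulAction G V] {X : SimpleGraph V} {l : Filter V}
  {o : V} {C F : Set V}

variable (G) in
/-- The translates of `C` and their complements. -/
def cutOrbit (C : Set V) : SubMulAction G (Set V) where
  carrier := {D | ∃ g : G, D = g • C ∨ D = (g • C)ᶜ}
  smul_mem' := by
    rintro g D ⟨h, rfl | rfl⟩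
    · exact ⟨g * h, .inl (mul_smul g h C).symm⟩
    · exact ⟨g * h, .inr (by rw [Set.smul_set_compl, mul_smul])⟩

instance : Nonempty (cutOrbit G C) := ⟨⟨C, 1, .inl (one_smul G C).symm⟩⟩

instance : Compl (cutOrbit G C) where
  compl D := ⟨(D : Set V)ᶜ, by
    obtain ⟨g, hg | hg⟩ := D.2
    · exact ⟨g, .inr (by rw [hg])⟩
    · exact ⟨g, .inl (by rw [hg, compl_compl])⟩⟩

theorem coe_compl_cutOrbit (D : cutOrbit G C) : ((Dᶜ : cutOrbit G C) : Set V) = (D : Set V)ᶜ := rfl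

instance : IsTreeSetAction G (cutOrbit G C) where
  smul_mono _ _ _ h := Set.smul_set_mono h
  smul_compl _ _ := Subtype.ext Set.smul_set_compl

theorem exists_smul_eq_or_compl (D E : cutOrbit G C) : ∃ g : G, g • D = E ∨ g • D = Eᶜ := by
  obtain ⟨D, g, hD⟩ := D
  obtain ⟨E, h, hE⟩ := E
  refine ⟨h * g⁻¹, ?_⟩
  simp only [Subtype.ext_iff, coe_compl_cutOrbit, SubMulAction.val_smul]
  rcases hD with rfl | rfl <;> rcases hE with rfl | rfl <;>
    simp [mul_smul, Set.smul_set_compl]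

theorem IsOptimalCut.of_mem_cutOrbit [IsGraphAction G X] (hl : ∀ g : G, Tendsto (g • ·) l l)
    (hC : IsOptimalCut X l C) (D : cutOrbit G C) : IsOptimalCut X l (D : Set V) := by
  obtain ⟨_, g, rfl | rfl⟩ := D
  exacts [hC.smul hl g, (hC.smul hl g).compl]

theorem finite_setOf_mem_le (hX : X.Preconnected)
    (hC : ∀ D : cutOrbit G C, IsOptimalCut X l (D : Set V)) (v : V) (F : cutOrbit G C) :
    {D : cutOrbit G C | v ∈ (D : Set V) ∧ D ≤ F}.Finite := by
  obtain ⟨y, hy⟩ := (hC F).frequently_notMem.exists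
  exact ((finite_setOf_isMinCut_separating hX l v y).preimage
    Subtype.val_injective.injOn).subset fun D hD =>
      ⟨(hC D).toIsMinCut, hD.1, fun h => hy (hD.2 h)⟩

theorem isTreeSet_cutOrbit (hX : X.Preconnected)
    (hC : ∀ D : cutOrbit G C, IsOptimalCut X l (D : Set V)) : IsTreeSet (cutOrbit G C) where
  compl_involutive _ := Subtype.ext (compl_compl _)
  compl_antitone _ _ h := Set.compl_subset_compl.2 h
  nested D E := (hC D).nested hX (hC E)
  not_le_compl {D E} h h' := by
    obtain ⟨x, hx⟩ := (hC D).frequently_mem.exists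
    exact h' hx (h hx)
  finite_Icc D E := by
    obtain ⟨x, hx⟩ := (hC D).frequently_mem.exists
    exact (finite_setOf_mem_le hX hC x E).subset fun F hF => ⟨hF.1 hx, hF.2⟩

theorem fixesVertex_cutOrbit (hX : X.Preconnected)
    (hC : ∀ D : cutOrbit G C, IsOptimalCut X l (D : Set V)) {L : Subgroup G} {v : V}
    (hL : L ≤ MulAction.stabilizer G v) : IsTreeSet.FixesVertex (cutOrbit G C) L := by
  refine ⟨{D | v ∈ (D : Set V)}, ⟨fun D => Iff.rfl, fun D E hDE h => hDE h⟩, ?_, fun g hg => ?_⟩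
  · obtain ⟨F, hF⟩ : ∃ F : cutOrbit G C, v ∈ (F : Set V) := by
      let F : cutOrbit G C := Classical.arbitrary _
      by_cases hv : v ∈ (F : Set V)
      exacts [⟨F, hv⟩, ⟨Fᶜ, hv⟩]
    obtain ⟨E, hE⟩ := (finite_setOf_mem_le hX hC v F).exists_minimal ⟨F, hF, le_rfl⟩
    exact ⟨E, hE.prop.1, fun D hD hle => hE.le_of_le ⟨hD, hle.trans hE.prop.2⟩ hle⟩
  · ext D
    rw [Set.mem_smul_set_iff_inv_smul_mem]
    change v ∈ g⁻¹ • (D : Set V) ↔ v ∈ (D : Set V)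
    rw [Set.mem_inv_smul_set_iff, hL hg]

/-- Neighbourhoods of infinity of the orbit of `o`, counted with multiplicity: a set of vertices is
negligible if it contains `g • o` for only finitely many `g`. -/
def orbitFilter (G : Type*) [SMul G V] (o : V) : Filter V := map (fun g : G => g • o) cofinite

theorem tendsto_smul_orbitFilter (g : G) :
    Tendsto (g • ·) (orbitFilter G o) (orbitFilter G o) := by
  refine tendsto_map'_iff.2 ?_
  have hcomp : (g • ·) ∘ (fun h : G => h • o) = (· • o) ∘ (g * ·) :=
    funext fun h => (mul_smul g h o).symm
  rw [hcomp]
  exact tendsto_map.comp (mul_right_injective g).tendsto_cofinite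

theorem frequently_smul_notMem {a : V} (ha : a ∈ MulAction.orbit G o)
    (hF : ∃ᶠ v in orbitFilter G o, v ∉ F) : ∃ᶠ g : G in cofinite, g • a ∉ F := by
  obtain ⟨k, rfl⟩ := ha
  refine (mul_left_injective k⁻¹).tendsto_cofinite.frequently ?_
  simpa only [mul_smul, inv_smul_smul] using frequently_map.1 hF

theorem finite_setOf_smul_mem {α : Type*} [MulAction G α] {S : Set α} (hS : S.Finite) {a : α}
    (ha : {g : G | g • a = a}.Finite) : {g : G | g • a ∈ S}.Finite := by
  refine Set.Finite.preimage' (f := fun g : G => g • a) hS fun b _ => ?_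
  by_cases hb : ∃ g : G, g • a = b
  · obtain ⟨g, rfl⟩ := hb
    refine (ha.image (g * ·)).subset fun h hh => ⟨g⁻¹ * h, ?_, mul_inv_cancel_left g h⟩
    rwa [Set.mem_ofPred_eq, mul_smul, inv_smul_eq_iff]
  · exact Set.finite_empty.subset fun g hg => hb ⟨g, hg⟩

theorem finite_setOf_smul_mem_coboundary
    (hstab : ∀ {u v : V}, X.Adj u v → {g : G | g • u = u ∧ g • v = v}.Finite) {e : V × V}
    (he : X.Adj e.1 e.2) (hF : (coboundary X F).Finite) :
    {g : G | g • e ∈ coboundary X F}.Finite :=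
  finite_setOf_smul_mem hF <| (hstab he).subset fun _ hg =>
    ⟨congrArg Prod.fst hg, congrArg Prod.snd hg⟩

variable [IsGraphAction G X]

theorem finite_setOf_smul_set_eq (hX : X.Preconnected)
    (hstab : ∀ {u v : V}, X.Adj u v → {g : G | g • u = u ∧ g • v = v}.Finite)
    (hF : IsCut X l F) : {g : G | g • F = F}.Finite := by
  obtain ⟨e, he⟩ := coboundary_nonempty hX hF.frequently_mem.exists hF.frequently_notMem.exists
  refine (finite_setOf_smul_mem_coboundary hstab he.1 hF.finite_coboundary).subset fun g hg => ?_
  have hsmul := Set.smul_mem_smul_set (a := g) he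
  rwa [← coboundary_smul, hg] at hsmul

-- For all but finitely many `g`, the translate by `g` of an edge leaving `F` lies on one side of
-- `F`; it lies outside `F` infinitely often.
theorem IsOptimalCut.exists_ssubset_smul (hX : X.Preconnected)
    (hstab : ∀ {u v : V}, X.Adj u v → {g : G | g • u = u ∧ g • v = v}.Finite)
    (horb : ∀ {u v : V}, X.Adj u v → u ∈ MulAction.orbit G o ∨ v ∈ MulAction.orbit G o)
    (hF : IsOptimalCut X (orbitFilter G o) F) : ∃ g : G, F ⊂ g • F ∨ F ⊂ (g • F)ᶜ := by
  obtain ⟨e, he⟩ := coboundary_nonempty hX hF.frequently_mem.exists hF.frequently_notMem.exists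
  have hfreq : ∃ᶠ g : G in cofinite, g • e.1 ∉ F ∨ g • e.2 ∉ F :=
    (horb he.1).elim
      (fun h => (frequently_smul_notMem h hF.frequently_notMem).mono fun _ => .inl)
      (fun h => (frequently_smul_notMem h hF.frequently_notMem).mono fun _ => .inr)
  have hev := (finite_setOf_smul_mem_coboundary (G := G) hstab he.1
    hF.finite_coboundary).eventually_cofinite_notMem
  obtain ⟨g, hout, hg⟩ := (hfreq.and_eventually hev).exists
  have hiff : g • e.1 ∈ F ↔ g • e.2 ∈ F :=
    not_not.1 fun h => hg ⟨(IsGraphAction.adj_smul_iff g).2 he.1, h⟩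
  have hnested := hF.nested hX (hF.smul tendsto_smul_orbitFilter g)
  have h₁ : g • e.1 ∉ F := by tauto
  have h₂ : g • e.2 ∉ F := by tauto
  have hsep : ¬(g • e.1 ∈ g • F ↔ g • e.2 ∈ g • F) := by
    simpa only [Set.smul_mem_smul_set_iff] using he.2
  by_cases h : g • e.1 ∈ g • F
  · exact ⟨g, hnested.ssubset_or h₁ h h₂ fun h' => hsep (iff_of_true h h')⟩
  · exact ⟨g, hnested.ssubset_or h₂ (not_not.1 fun h' => hsep (iff_of_false h h')) h₁ h⟩

theorem hasFiniteSplitting_of_isCut (hX : X.Preconnected)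
    (hstab : ∀ {u v : V}, X.Adj u v → {g : G | g • u = u ∧ g • v = v}.Finite)
    (horb : ∀ {u v : V}, X.Adj u v → u ∈ MulAction.orbit G o ∨ v ∈ MulAction.orbit G o)
    (hcut : IsCut X (orbitFilter G o) C) {κ : Type*} {L : κ → Subgroup G}
    (hL : ∀ k, ∃ v : V, L k ≤ MulAction.stabilizer G v) : HasFiniteSplitting.{w} G L := by
  obtain ⟨D, hD⟩ := hcut.exists_isOptimalCut
  have hopt := hD.of_mem_cutOrbit (G := G) tendsto_smul_orbitFilter
  have := isTreeSet_cutOrbit hX hopt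
  have : IsSplittingAction G (cutOrbit G D) :=
    { exists_smul_eq_or := exists_smul_eq_or_compl
      finite_stabilizer := fun F => (finite_setOf_smul_set_eq hX hstab (hopt F).toIsCut).subset
        fun g hg => congrArg Subtype.val hg
      exists_lt_smul_or := fun F => (hopt F).exists_ssubset_smul hX hstab horb }
  exact IsTreeSet.hasFiniteSplitting fun k => (hL k).elim fun _ => fixesVertex_cutOrbit hX hopt

end CutOrbit

/-! ### Almost invariant sets -/

section AlmostInvariant

variable {G : Type*} [Group G] {C D : Set G}

/-- `C` is almost equal to each of its right translates. -/
def IsAlmostInvariant (C : Set G) : Prop := ∀ x : G, (· * x) ⁻¹' C =ᶠ[cofinite] C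

/-- `C` is almost equal to a union of left cosets of `L`. -/
def IsAdapted (L : Subgroup G) (C : Set G) : Prop :=
  ∃ D : Set G, C =ᶠ[cofinite] D ∧ ∀ x ∈ L, (· * x) ⁻¹' D = D

theorem preimage_mul_right_eventuallyEq (h : C =ᶠ[cofinite] D) (x : G) :
    (· * x) ⁻¹' C =ᶠ[cofinite] (· * x) ⁻¹' D :=
  h.comp_tendsto (mul_left_injective x).tendsto_cofinite

theorem IsAdapted.preimage_mul_right_eventuallyEq {L : Subgroup G} (h : IsAdapted L C) {x : G}
    (hx : x ∈ L) : (· * x) ⁻¹' C =ᶠ[cofinite] C := by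
  obtain ⟨D, hD, hinv⟩ := h
  have := _root_.preimage_mul_right_eventuallyEq hD x
  rw [hinv x hx] at this
  exact this.trans hD.symm

theorem isAlmostInvariant_of_iSup_eq_top {κ : Type*} {L : κ → Subgroup G} (hL : ⨆ k, L k = ⊤)
    (h : ∀ k, IsAdapted (L k) C) : IsAlmostInvariant C := fun x => by
  induction (hL ▸ Subgroup.mem_top x : x ∈ ⨆ k, L k) using Subgroup.iSup_induction' with
  | hp k x hx => exact (h k).preimage_mul_right_eventuallyEq hx
  | h1 => simp only [mul_one]; rfl
  | hmul x y _ _ hx hy =>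
    simp only [← mul_assoc]
    exact (preimage_mul_right_eventuallyEq hy x).trans hx

theorem IsAdapted.map_conj {L : Subgroup G} (h : IsAdapted L C) (hC : IsAlmostInvariant C)
    (x : G) : IsAdapted (L.map (MulAut.conj x).toMonoidHom) C := by
  obtain ⟨D, hD, hinv⟩ := h
  refine ⟨(· * x) ⁻¹' D, (hC x).symm.trans (_root_.preimage_mul_right_eventuallyEq hD x), ?_⟩
  rintro _ ⟨y, hy, rfl⟩
  ext a
  have := Set.ext_iff.1 (hinv y hy) (a * x)
  simpa [mul_assoc] using this

end AlmostInvariant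

/-! ### The coned-off Cayley graph -/

section ConedGraph

universe u v

variable {G : Type u} [Group G] {κ : Type v} {S : Set G} {L : κ → Subgroup G}

/-- The elements of `G` and a cone point for every left coset of every `L k`. -/
abbrev ConedVertex (L : κ → Subgroup G) : Type max u v := G ⊕ (Σ k, G ⧸ L k)

/-- The directed edges of the coned-off Cayley graph: `g → g * s` for `s ∈ S`, and an edge from each
group element to each of its cosets. -/
def conedRel (S : Set G) (L : κ → Subgroup G) : ConedVertex L → ConedVertex L → Prop
  | .inl g, .inl h => g⁻¹ * h ∈ S
  | .inl g, .inr y => (g : G ⧸ L y.1) = y.2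
  | .inr _, _ => False

/-- The Cayley graph of `G` with respect to `S`, with a cone attached to every left coset of every
`L k`; it is connected as soon as `S` and the `L k` together generate `G`. -/
def conedGraph (S : Set G) (L : κ → Subgroup G) : SimpleGraph (ConedVertex L) :=
  SimpleGraph.fromRel (conedRel S L)

theorem conedRel_smul_iff (g : G) (u v : ConedVertex L) :
    conedRel S L (g • u) (g • v) ↔ conedRel S L u v := by
  rcases u with u | u <;> rcases v with v | ⟨k, v⟩
  · simp [conedRel, mul_assoc]
  · exact smul_left_cancel_iff (α := G) (β := G ⧸ L k) (x := u) (y := v) g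
  · exact Iff.rfl
  · exact Iff.rfl

instance : IsGraphAction G (conedGraph S L) where
  adj_smul_iff g u v := by
    simp only [conedGraph, SimpleGraph.fromRel_adj, conedRel_smul_iff, ne_eq, smul_left_cancel_iff]

theorem exists_eq_inl_of_conedRel {u v : ConedVertex L} (h : conedRel S L u v) :
    ∃ g : G, u = .inl g := by
  rcases u with u | u
  exacts [⟨u, rfl⟩, h.elim]

theorem exists_eq_inl_of_adj {u v : ConedVertex L} (h : (conedGraph S L).Adj u v) :
    (∃ g : G, u = .inl g) ∨ ∃ g : G, v = .inl g :=
  h.2.imp exists_eq_inl_of_conedRel exists_eq_inl_of_conedRel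

theorem eq_one_of_smul_inl_eq {g x : G} (h : g • (.inl x : ConedVertex L) = .inl x) : g = 1 :=
  mul_eq_right.1 (Sum.inl_injective h)

theorem inl_mem_orbit (x : G) : .inl x ∈ MulAction.orbit G (.inl 1 : ConedVertex L) :=
  ⟨x, congrArg Sum.inl (mul_one x)⟩

theorem finite_conedGraph_edge_stabilizer {u v : ConedVertex L} (h : (conedGraph S L).Adj u v) :
    {g : G | g • u = u ∧ g • v = v}.Finite := by
  refine (Set.finite_singleton 1).subset fun g hg => ?_
  rcases exists_eq_inl_of_adj h with ⟨x, rfl⟩ | ⟨x, rfl⟩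
  exacts [eq_one_of_smul_inl_eq hg.1, eq_one_of_smul_inl_eq hg.2]

theorem mem_orbit_or_mem_orbit_of_adj {u v : ConedVertex L} (h : (conedGraph S L).Adj u v) :
    u ∈ MulAction.orbit G (.inl 1) ∨ v ∈ MulAction.orbit G (.inl 1) := by
  rcases exists_eq_inl_of_adj h with ⟨x, rfl⟩ | ⟨x, rfl⟩
  exacts [.inl (inl_mem_orbit x), .inr (inl_mem_orbit x)]

theorem le_stabilizer_inr (k : κ) :
    L k ≤ MulAction.stabilizer G (.inr ⟨k, (1 : G)⟩ : ConedVertex L) := fun g hg => by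
  change Sum.inr (⟨k, ((g * 1 : G) : G ⧸ L k)⟩ : Σ k, G ⧸ L k) = _
  rw [mul_one, QuotientGroup.eq.2 (by simpa using hg : g⁻¹ * 1 ∈ L k)]

theorem reachable_of_conedRel {u v : ConedVertex L} (h : conedRel S L u v) :
    (conedGraph S L).Reachable u v := by
  by_cases huv : u = v
  · rw [huv]
  · exact SimpleGraph.Adj.reachable ⟨huv, .inl h⟩

theorem reachable_inl_inr (g : G) (k : κ) :
    (conedGraph S L).Reachable (.inl g) (.inr ⟨k, (g : G ⧸ L k)⟩) :=
  reachable_of_conedRel (u := .inl g) (v := .inr ⟨k, (g : G ⧸ L k)⟩) (rfl : (g : G ⧸ L k) = g)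

theorem reachable_inl_mul (hgen : Subgroup.closure S ⊔ ⨆ k, L k = ⊤) (g h : G) :
    (conedGraph S L).Reachable (.inl h) (.inl (h * g)) := by
  let R : Subgroup G :=
    { carrier := {g | ∀ h, (conedGraph S L).Reachable (.inl h) (.inl (h * g))}
      one_mem' := fun h => by rw [mul_one]
      mul_mem' := fun {x y} hx hy h => by
        rw [← mul_assoc]
        exact (hx h).trans (hy (h * x))
      inv_mem' := fun {x} hx h => by simpa using (hx (h * x⁻¹)).symm }
  have hR : Subgroup.closure S ⊔ ⨆ k, L k ≤ R := by
    refine sup_le ((Subgroup.closure_le R).2 fun s hs h => ?_) (iSup_le fun k x hx h => ?_)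
    · refine reachable_of_conedRel ?_
      change h⁻¹ * (h * s) ∈ S
      rwa [inv_mul_cancel_left]
    · have hcoset : ((h * x : G) : G ⧸ L k) = h := QuotientGroup.mk_mul_of_mem h hx
      have hreach := reachable_inl_inr (S := S) (L := L) (h * x) k
      rw [hcoset] at hreach
      exact (reachable_inl_inr h k).trans hreach.symm
  exact hR (hgen ▸ Subgroup.mem_top g) h

theorem conedGraph_preconnected (hgen : Subgroup.closure S ⊔ ⨆ k, L k = ⊤) :
    (conedGraph S L).Preconnected := by
  have hone (g : G) : (conedGraph S L).Reachable (.inl 1) (.inl g) := by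
    simpa only [one_mul] using reachable_inl_mul hgen g 1
  have hall (v : ConedVertex L) : (conedGraph S L).Reachable (.inl 1) v := by
    rcases v with g | ⟨k, x⟩
    · exact hone g
    · obtain ⟨g, rfl⟩ := QuotientGroup.mk_surjective x
      exact (hone g).trans (reachable_inl_inr g k)
  exact fun u v => (hall u).symm.trans (hall v)

variable {C : Set G} {D : κ → Set G}

/-- The extension of a subset `C` of `G` to the cone points by unions `D k` of left cosets. -/
def conedSet (L : κ → Subgroup G) (C : Set G) (D : κ → Set G) : Set (ConedVertex L) :=
  {v | Sum.elim (· ∈ C) (fun y => ∃ g ∈ D y.1, (g : G ⧸ L y.1) = y.2) v}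

theorem inl_mem_conedSet {g : G} : .inl g ∈ conedSet L C D ↔ g ∈ C := Iff.rfl

theorem inr_mem_conedSet {k : κ} (hD : ∀ x ∈ L k, (· * x) ⁻¹' D k = D k) {g : G} :
    .inr ⟨k, g⟩ ∈ conedSet L C D ↔ g ∈ D k := by
  refine ⟨fun ⟨h, hh, heq⟩ => ?_, fun h => ⟨g, h, rfl⟩⟩
  have hmul : h * (h⁻¹ * g) ∈ D k := (Set.ext_iff.1 (hD _ (QuotientGroup.eq.1 heq)) h).2 hh
  rwa [mul_inv_cancel_left] at hmul

theorem finite_coboundary_conedSet [Finite κ] (hS : S.Finite) (hC : IsAlmostInvariant C)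
    (hD : ∀ k, ∀ x ∈ L k, (· * x) ⁻¹' D k = D k) (hCD : ∀ k, C =ᶠ[cofinite] D k) :
    (coboundary (conedGraph S L) (conedSet L C D)).Finite := by
  have hfin : {e : _ × _ | conedRel S L e.1 e.2 ∧
      ¬(e.1 ∈ conedSet L C D ↔ e.2 ∈ conedSet L C D)}.Finite := by
    refine ((hS.biUnion fun s _ => (eventually_cofinite.1 (hC s).mem_iff).image fun g =>
      (Sum.inl g, Sum.inl (g * s))).union (Set.finite_iUnion fun k =>
        (eventually_cofinite.1 (hCD k).mem_iff).image fun g =>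
          (Sum.inl g, Sum.inr ⟨k, (g : G ⧸ L k)⟩))).subset ?_
    rintro ⟨u | u, v | ⟨k, v⟩⟩ ⟨h, hn⟩
    · refine .inl (Set.mem_biUnion h ⟨u, fun hiff => hn ?_, by simp⟩)
      rw [Set.mem_preimage, mul_inv_cancel_left] at hiff
      exact hiff.symm
    · obtain rfl : (u : G ⧸ L k) = v := h
      refine .inr (Set.mem_iUnion.2 ⟨k, u, ?_, rfl⟩)
      rwa [inr_mem_conedSet (hD k), inl_mem_conedSet] at hn
    · exact h.elim
    · exact h.elim
  refine (hfin.union (hfin.image Prod.swap)).subset ?_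
  rintro ⟨u, v⟩ ⟨⟨-, h | h⟩, hne⟩
  · exact .inl ⟨h, hne⟩
  · exact .inr ⟨(v, u), ⟨h, fun h' => hne h'.symm⟩, rfl⟩

theorem frequently_orbitFilter_inl_one {E : Set (ConedVertex L)}
    (h : {g : G | .inl g ∈ E}.Infinite) :
    ∃ᶠ v in orbitFilter G (.inl 1 : ConedVertex L), v ∈ E := by
  refine frequently_map.2 ((Set.infinite_iff_frequently_cofinite.1 h).mono fun g hg => ?_)
  change .inl (g * 1) ∈ E
  rwa [mul_one]

theorem hasFiniteSplitting_of_isAdapted [Finite κ] (hS : S.Finite)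
    (hgen : Subgroup.closure S ⊔ ⨆ k, L k = ⊤) (hC : C.Infinite) (hC' : Cᶜ.Infinite)
    (hinv : IsAlmostInvariant C) (hL : ∀ k, IsAdapted (L k) C) :
    HasFiniteSplitting.{max u v} G L := by
  choose D hCD hD using hL
  have hcut : IsCut (conedGraph S L) (orbitFilter G (.inl 1)) (conedSet L C D) :=
    ⟨finite_coboundary_conedSet hS hinv hD hCD, frequently_orbitFilter_inl_one hC,
      frequently_orbitFilter_inl_one hC'⟩
  exact hasFiniteSplitting_of_isCut (conedGraph_preconnected hgen)
    finite_conedGraph_edge_stabilizer mem_orbit_or_mem_orbit_of_adj hcut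
    fun k => ⟨_, le_stabilizer_inr k⟩

end ConedGraph

/-! ### Free products -/

section FreeProduct

open Monoid CoprodI

section FirstIndex

variable {ι : Type*} {M : ι → Type*} [∀ i, Monoid (M i)]

open Classical in
/-- The index of the first letter of the reduced word representing `x`, or `none` for `x = 1`. -/
noncomputable def firstIndex (x : CoprodI M) : Option ι := (Word.equiv x).fstIdx

theorem firstIndex_prod (w : Word M) : firstIndex w.prod = w.fstIdx := by
  classical
  exact congrArg Word.fstIdx (Word.equiv.apply_symm_apply w)

theorem exists_word_prod_eq (x : CoprodI M) : ∃ w : Word M, w.prod = x := by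
  classical
  exact ⟨Word.equiv x, Word.equiv.symm_apply_apply x⟩

theorem firstIndex_one : firstIndex (1 : CoprodI M) = none := firstIndex_prod Word.empty

theorem firstIndex_of_mul {i : ι} {m : M i} (hm : m ≠ 1) {x : CoprodI M}
    (hx : firstIndex x ≠ some i) : firstIndex (of m * x) = some i := by
  obtain ⟨w, rfl⟩ := exists_word_prod_eq x
  rw [firstIndex_prod] at hx
  rw [← Word.prod_cons i m w hm hx, firstIndex_prod, Word.fstIdx_cons]

theorem firstIndex_of {i : ι} {m : M i} (hm : m ≠ 1) : firstIndex (of m) = some i := by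
  rw [← mul_one (of m), firstIndex_of_mul hm (by simp [firstIndex_one])]

theorem firstIndex_of_ne {i j : ι} (hij : i ≠ j) (m : M i) : firstIndex (of m) ≠ some j := by
  by_cases hm : m = 1
  · simp [hm, firstIndex_one]
  · simpa [firstIndex_of hm] using hij

theorem reduced_word_induction {motive : CoprodI M → Prop} (x : CoprodI M) (one : motive 1)
    (of_mul : ∀ (i) (m : M i) (x), m ≠ 1 → firstIndex x ≠ some i → motive x → motive (of m * x)) :
    motive x := by
  obtain ⟨w, rfl⟩ := exists_word_prod_eq x
  induction w using Word.consRecOn with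
  | empty => exact one
  | cons i m w hw hm ih =>
    rw [Word.prod_cons]
    exact of_mul i m _ hm (by rwa [firstIndex_prod]) ih

theorem firstIndex_eq_none_iff {x : CoprodI M} : firstIndex x = none ↔ x = 1 := by
  refine ⟨fun h => ?_, fun h => by rw [h, firstIndex_one]⟩
  induction x using reduced_word_induction with
  | one => rfl
  | of_mul i m x hm hx _ => simp [firstIndex_of_mul hm hx] at h

theorem mem_range_of_or_firstIndex_mul_of {i : ι} (x : CoprodI M) (m : M i) :
    (∃ l : M i, x = of l) ∨ firstIndex (x * of m) = firstIndex x := by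
  induction x using reduced_word_induction with
  | one => exact .inl ⟨1, (map_one _).symm⟩
  | of_mul k l y hl hy ih =>
    rcases ih with ⟨p, rfl⟩ | ih
    · by_cases hk : k = i
      · subst hk
        exact .inl ⟨l * p, (map_mul _ _ _).symm⟩
      · right
        rw [mul_assoc, ← map_mul, firstIndex_of_mul hl (firstIndex_of_ne (Ne.symm hk) _),
          firstIndex_of_mul hl hy]
    · right
      rw [mul_assoc, firstIndex_of_mul hl (by rwa [ih]), firstIndex_of_mul hl hy]

theorem firstIndex_mul_of_eq_some_iff {i j : ι} (hij : i ≠ j) (x : CoprodI M) (m : M i) :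
    firstIndex (x * of m) = some j ↔ firstIndex x = some j := by
  rcases mem_range_of_or_firstIndex_mul_of x m with ⟨l, rfl⟩ | h
  · rw [← map_mul]
    exact iff_of_false (firstIndex_of_ne hij _) (firstIndex_of_ne hij _)
  · rw [h]

theorem firstIndex_mul_of_eq_some_or_none_iff {i : ι} (x : CoprodI M) (m : M i) :
    firstIndex (x * of m) = some i ∨ firstIndex (x * of m) = none ↔
      firstIndex x = some i ∨ firstIndex x = none := by
  have hof (l : M i) : firstIndex (of l) = some i ∨ firstIndex (of l) = none := by
    by_cases hl : l = 1
    · exact .inr (by rw [hl, map_one, firstIndex_one])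
    · exact .inl (firstIndex_of hl)
  rcases mem_range_of_or_firstIndex_mul_of x m with ⟨l, rfl⟩ | h
  · rw [← map_mul]
    exact iff_of_true (hof _) (hof _)
  · rw [h]

end FirstIndex

variable {ι : Type*} {M : ι → Type*} [∀ i, Group (M i)] {i j : ι}

theorem infinite_setOf_firstIndex_eq (hij : i ≠ j) [Nontrivial (M i)] [Nontrivial (M j)] :
    {x : CoprodI M | firstIndex x = some i}.Infinite := by
  obtain ⟨m, hm⟩ := exists_ne (1 : M i)
  obtain ⟨n, hn⟩ := exists_ne (1 : M j)
  have hn' {x : CoprodI M} (hx : firstIndex x = some i) : firstIndex (of n * x) = some j :=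
    firstIndex_of_mul hn (by simpa [hx] using hij)
  have hmaps : Set.MapsTo (of m * of n * ·) {x : CoprodI M | firstIndex x = some i}
      {x | firstIndex x = some i} := fun x hx => by
    change firstIndex (of m * of n * x) = some i
    rw [mul_assoc]
    exact firstIndex_of_mul hm (by simpa [hn' hx] using hij.symm)
  intro hfin
  have hbij := (hfin.injOn_iff_bijOn_of_mapsTo hmaps).1 (mul_right_injective _).injOn
  obtain ⟨x, hx, hxm⟩ := hbij.surjOn (firstIndex_of hm)
  have hx1 : of n * x = 1 := by simpa [mul_assoc] using hxm
  simpa [hx1, firstIndex_one] using hn' hx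

theorem infinite_compl_setOf_firstIndex_eq (hij : i ≠ j) [Nontrivial (M i)] [Nontrivial (M j)] :
    {x : CoprodI M | firstIndex x = some i}ᶜ.Infinite :=
  (infinite_setOf_firstIndex_eq hij.symm).mono fun x (hx : firstIndex x = some j) => by
    simpa [hx] using hij.symm

theorem isAdapted_range_of (i k : ι) :
    IsAdapted (of : M k →* CoprodI M).range {x | firstIndex x = some i} := by
  by_cases hk : k = i
  · subst hk
    refine ⟨{x | firstIndex x = some k ∨ firstIndex x = none}, ?_, ?_⟩
    · refine eventually_cofinite.2 ((Set.finite_singleton 1).subset fun x hx => ?_)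
      rw [Set.mem_singleton_iff, ← firstIndex_eq_none_iff]
      by_contra hne
      exact hx (propext (or_iff_left hne).symm)
    · rintro _ ⟨m, rfl⟩
      exact Set.ext fun x => firstIndex_mul_of_eq_some_or_none_iff x m
  · refine ⟨_, .rfl, ?_⟩
    rintro _ ⟨m, rfl⟩
    exact Set.ext fun x => firstIndex_mul_of_eq_some_iff hk x m

theorem center_coprodI_eq_bot (hij : i ≠ j) [Nontrivial (M i)] [Nontrivial (M j)] :
    Subgroup.center (CoprodI M) = ⊥ := by
  obtain ⟨m, hm⟩ := exists_ne (1 : M i)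
  obtain ⟨n, hn⟩ := exists_ne (1 : M j)
  refine (Subgroup.eq_bot_iff_forall _).2 fun x hx => by_contra fun hx1 => ?_
  have hfirst {k : ι} {l : M k} (hl : l ≠ 1) : firstIndex x = some k := by
    by_contra hk
    have hlx : firstIndex (x * of l) = some k := by
      rw [← Subgroup.mem_center_iff.1 hx, firstIndex_of_mul hl hk]
    rcases mem_range_of_or_firstIndex_mul_of x l with ⟨p, rfl⟩ | heq
    · exact hk (firstIndex_of fun hp => hx1 (by rw [hp, map_one]))
    · exact hk (heq ▸ hlx)
  exact hij (Option.some_injective _ ((hfirst hm).symm.trans (hfirst hn)))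

variable {A : Type*} [Group A] {K : ι → Subgroup A}

theorem iSup_eq_top_of_lift_surjective
    (hK : Function.Surjective (CoprodI.lift fun i => (K i).subtype)) : ⨆ i, K i = ⊤ := by
  have hrange := range_eq_iSup (fun i => K i) fun i => (K i).subtype
  rw [MonoidHom.range_eq_top.2 hK] at hrange
  simpa only [Subgroup.range_subtype] using hrange.symm

theorem IsAdapted.comap_mulEquiv {P : Type*} [Group P] {L : Subgroup P} {C : Set P}
    (h : IsAdapted L C) (e : A ≃* P) : IsAdapted (L.comap e.toMonoidHom) (e ⁻¹' C) := by
  obtain ⟨D, hD, hinv⟩ := h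
  refine ⟨e ⁻¹' D, hD.comp_tendsto e.injective.tendsto_cofinite, fun x hx => ?_⟩
  ext a
  simpa using Set.ext_iff.1 (hinv (e x) hx) (e a)

theorem exists_isAdapted (hK : Function.Bijective (CoprodI.lift fun i => (K i).subtype))
    (hij : i ≠ j) (hi : K i ≠ ⊥) (hj : K j ≠ ⊥) :
    ∃ C : Set A, C.Infinite ∧ Cᶜ.Infinite ∧ ∀ k, IsAdapted (K k) C := by
  have : Nontrivial (K i) := (K i).nontrivial_iff_ne_bot.2 hi
  have : Nontrivial (K j) := (K j).nontrivial_iff_ne_bot.2 hj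
  let e : A ≃* CoprodI (fun i => K i) := (MulEquiv.ofBijective _ hK).symm
  have hsub : Set.univ ⊆ Set.range e := fun x _ => e.surjective x
  refine ⟨e ⁻¹' {x | firstIndex x = some i},
    (infinite_setOf_firstIndex_eq hij).preimage ((Set.subset_univ _).trans hsub),
    (infinite_compl_setOf_firstIndex_eq hij).preimage ((Set.subset_univ _).trans hsub),
    fun k => ?_⟩
  have hcomap : (of (M := fun i => K i) (i := k)).range.comap e.toMonoidHom = K k :=
    calc _ = ((CoprodI.lift fun i => (K i).subtype).comp of).range :=
          (Subgroup.comap_equiv_eq_map_symm' e _).trans (MonoidHom.map_range _ _)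
      _ = K k := by rw [lift_comp_of, Subgroup.range_subtype]
  have := (isAdapted_range_of i k).comap_mulEquiv e
  rwa [hcomap] at this

theorem conj_injective_of_lift_bijective
    (hK : Function.Bijective (CoprodI.lift fun i => (K i).subtype)) (hij : i ≠ j)
    (hi : K i ≠ ⊥) (hj : K j ≠ ⊥) : Function.Injective (MulAut.conj (G := A)) := by
  have : Nontrivial (K i) := (K i).nontrivial_iff_ne_bot.2 hi
  have : Nontrivial (K j) := (K j).nontrivial_iff_ne_bot.2 hj
  refine (injective_iff_map_eq_one _).2 fun a ha => ?_
  have hcomm (y : A) : y * a = a * y :=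
    (mul_inv_eq_iff_eq_mul.1 (DFunLike.congr_fun ha y)).symm
  have hcenter : (MulEquiv.ofBijective _ hK).symm a ∈ Subgroup.center (CoprodI fun i => K i) :=
    (MulEquivClass.apply_mem_center_iff _).2 (Subgroup.mem_center_iff.2 hcomm)
  rw [center_coprodI_eq_bot hij, Subgroup.mem_bot] at hcenter
  simpa using hcenter

end FreeProduct

/-! ### Finite extensions -/

section FiniteExtension

universe u v

variable {A : Type u} {G : Type v} [Group A] [Group G] {c : A →* G}

/-- Coordinates on a finite extension `G` of a group `A`: each `g : G` factors as
`c (base g) * rep g`, where `rep` chooses representatives of the finitely many cosets of `A`. -/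
structure FiniteExtensionCoordinates (c : A →* G) where
  base : G → A
  rep : G → G
  finite_range_rep : (Set.range rep).Finite
  map_base_mul_rep (g : G) : c (base g) * rep g = g
  base_map_mul (a : A) (g : G) : base (c a * g) = a * base g
  rep_map_mul (a : A) (g : G) : rep (c a * g) = rep g

theorem nonempty_finiteExtensionCoordinates (hc : Function.Injective c) [c.range.Normal]
    [c.range.FiniteIndex] : Nonempty (FiniteExtensionCoordinates c) := by
  have hbase (g : G) : ∃ a, c a = g * ((g : G ⧸ c.range).out)⁻¹ := by
    rw [← MonoidHom.mem_range, ← div_eq_mul_inv, ← QuotientGroup.eq_iff_div_mem]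
    exact (Quotient.out_eq' _).symm
  have hcoset (a : A) (g : G) : (c a * g : G) = (g : G ⧸ c.range) := by
    rw [QuotientGroup.eq_iff_div_mem]
    exact ⟨a, by simp⟩
  choose r hr using hbase
  exact ⟨{
    base := r
    rep := fun g => (g : G ⧸ c.range).out
    finite_range_rep := (Set.finite_range fun x : G ⧸ c.range => x.out).subset
      (Set.range_subset_iff.2 fun g => ⟨g, rfl⟩)
    map_base_mul_rep := fun g => by simp [hr]
    base_map_mul := fun a g => hc (by rw [map_mul, hr, hr, hcoset, mul_assoc])
    rep_map_mul := fun a g => congrArg Quotient.out (hcoset a g) }⟩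

namespace FiniteExtensionCoordinates

variable (e : FiniteExtensionCoordinates c)

theorem base_surjective : Function.Surjective e.base := fun a =>
  ⟨c (a * (e.base 1)⁻¹) * 1, by rw [e.base_map_mul, inv_mul_cancel_right]⟩

theorem base_mul (g x : G) : e.base (g * x) = e.base g * e.base (e.rep g * x) := by
  rw [← e.base_map_mul, ← mul_assoc, e.map_base_mul_rep]

theorem finite_setOf_base_mem {F : G → Set A} (hF : ∀ t, (F t).Finite) :
    {g | e.base g ∈ F (e.rep g)}.Finite :=
  (e.finite_range_rep.biUnion fun t _ => (hF t).image fun a => c a * t).subset fun g hg =>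
    Set.mem_biUnion ⟨g, rfl⟩ ⟨e.base g, hg, e.map_base_mul_rep g⟩

theorem closure_sup_eq_top {S : Set A} {L : Subgroup A} (hS : Subgroup.closure S ⊔ L = ⊤) :
    Subgroup.closure (c '' S ∪ Set.range e.rep) ⊔ L.map c = ⊤ := by
  refine eq_top_iff.2 fun g _ => ?_
  have hbase : c (e.base g) ∈ Subgroup.closure (c '' S) ⊔ L.map c := by
    rw [← MonoidHom.map_closure, ← Subgroup.map_sup, hS]
    exact ⟨_, Subgroup.mem_top _, rfl⟩
  rw [← e.map_base_mul_rep g]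
  exact mul_mem (sup_le_sup_right (Subgroup.closure_mono Set.subset_union_left) _ hbase)
    (Subgroup.mem_sup_left (Subgroup.subset_closure (.inr ⟨g, rfl⟩)))

theorem isAlmostInvariant_preimage_base {C : Set A} (hC : IsAlmostInvariant C) :
    IsAlmostInvariant (e.base ⁻¹' C) := fun x =>
  eventuallyEq_set.2 <| eventually_cofinite.2 <|
    (e.finite_setOf_base_mem fun t =>
      eventually_cofinite.1 (hC (e.base (t * x))).mem_iff).subset fun g hg => by
        rwa [Set.mem_ofPred_eq, Set.mem_preimage, Set.mem_preimage, Set.mem_preimage,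
          e.base_mul] at hg

theorem isAdapted_preimage_base [c.range.Normal] {C : Set A} {K : Subgroup A}
    (hK : ∀ t : G, IsAdapted (((K.map c).map (MulAut.conj t).toMonoidHom).comap c) C) :
    IsAdapted (K.map c) (e.base ⁻¹' C) := by
  choose D hCD hD using hK
  refine ⟨{g | e.base g ∈ D (e.rep g)}, eventuallyEq_set.2 <| eventually_cofinite.2 <|
    e.finite_setOf_base_mem fun t => eventually_cofinite.1 (hCD t).mem_iff, ?_⟩
  rintro _ ⟨x, hx, rfl⟩
  ext g
  obtain ⟨y, hy⟩ := ‹c.range.Normal›.conj_mem (c x) ⟨x, rfl⟩ (e.rep g)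
  have hrep : e.rep g = (c (e.base g))⁻¹ * g := eq_inv_mul_of_mul_eq (e.map_base_mul_rep g)
  have hmul : g * c x = c (e.base g * y * (e.base g)⁻¹) * g := by
    rw [map_mul, map_mul, hy, hrep, map_inv]
    group
  have hmulBase : e.base (g * c x) = e.base g * y := by
    rw [hmul, e.base_map_mul, inv_mul_cancel_right]
  have hmulRep : e.rep (g * c x) = e.rep g := by rw [hmul, e.rep_map_mul]
  have hmem := Set.ext_iff.1 (hD (e.rep g) y ⟨_, ⟨x, hx, rfl⟩, hy.symm⟩) (e.base g)
  rwa [Set.mem_preimage, Set.mem_ofPred_eq, hmulBase, hmulRep]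

end FiniteExtensionCoordinates

theorem hasFiniteSplitting_of_finiteIndex_range {κ : Type w} [Finite κ] {S C : Set A}
    {K : κ → Subgroup A} (hc : Function.Injective c) [c.range.Normal] [c.range.FiniteIndex]
    (hS : S.Finite) (hgen : Subgroup.closure S ⊔ ⨆ k, K k = ⊤)
    (hC : C.Infinite) (hC' : Cᶜ.Infinite) (hinv : IsAlmostInvariant C)
    (hK : ∀ k (t : G), IsAdapted ((((K k).map c).map (MulAut.conj t).toMonoidHom).comap c) C) :
    HasFiniteSplitting.{max v w} G fun k => (K k).map c := by
  obtain ⟨e⟩ := nonempty_finiteExtensionCoordinates hc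
  have hgen' := e.closure_sup_eq_top hgen
  rw [Subgroup.map_iSup] at hgen'
  have hrange : Set.univ ⊆ Set.range e.base := fun a _ => e.base_surjective a
  exact hasFiniteSplitting_of_isAdapted ((hS.image c).union e.finite_range_rep) hgen'
    (hC.preimage ((Set.subset_univ _).trans hrange))
    (hC'.preimage ((Set.subset_univ _).trans hrange))
    (e.isAlmostInvariant_preimage_base hinv) fun k => e.isAdapted_preimage_base (hK k)

end FiniteExtension

/-! ### Preimages of finite groups of outer automorphisms -/

section OuterAutomorphism

universe u v

variable {A : Type u} [Group A] {Q : Subgroup (OutG A)}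

/-- The embedding `a ↦ (x ↦ a * x * a⁻¹)` of `A` into the preimage of `Q` in `Aut(A)`. -/
def innerHom (Q : Subgroup (OutG A)) : A →* Q.comap (toOut A) :=
  MulAut.conj.codRestrict _ fun a => by
    have hone : toOut A (MulAut.conj a) = 1 := (QuotientGroup.eq_one_iff (N := Inn A) _).2 ⟨a, rfl⟩
    rw [Subgroup.mem_comap, hone]
    exact one_mem Q

theorem mem_map_innerHom {K : Subgroup A} {g : Q.comap (toOut A)} :
    g ∈ K.map (innerHom Q) ↔ ∃ a ∈ K, (g : MulAut A) = MulAut.conj a :=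
  exists_congr fun _ => and_congr_right fun _ => Subtype.ext_iff.trans eq_comm

theorem range_innerHom (Q : Subgroup (OutG A)) :
    (innerHom Q).range = ((toOut A).subgroupComap Q).ker := by
  ext g
  calc g ∈ (innerHom Q).range ↔ (g : MulAut A) ∈ Inn A := exists_congr fun _ => Subtype.ext_iff
    _ ↔ toOut A g = 1 := (QuotientGroup.eq_one_iff _).symm
    _ ↔ g ∈ ((toOut A).subgroupComap Q).ker := by
      rw [MonoidHom.mem_ker, Subtype.ext_iff]
      rfl

instance normal_range_innerHom : (innerHom Q).range.Normal := range_innerHom Q ▸ inferInstance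

instance finiteIndex_range_innerHom [Finite Q] : (innerHom Q).range.FiniteIndex :=
  range_innerHom Q ▸ inferInstance

theorem innerHom_apply_apply (t : Q.comap (toOut A)) (a : A) :
    innerHom Q ((t : MulAut A) a) = t * innerHom Q a * t⁻¹ := by
  refine Subtype.ext (MulEquiv.ext fun b => ?_)
  change _ = (t : MulAut A) (MulAut.conj a ((t : MulAut A).symm b))
  simp [innerHom]

theorem innerHom_injective (h : Function.Injective (MulAut.conj (G := A))) :
    Function.Injective (innerHom Q) := fun _ _ hab => h (congrArg Subtype.val hab)

theorem comap_innerHom_conj (h : Function.Injective (MulAut.conj (G := A))) (K : Subgroup A)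
    (t : Q.comap (toOut A)) :
    ((K.map (innerHom Q)).map (MulAut.conj t).toMonoidHom).comap (innerHom Q) =
      K.map (t : MulAut A).toMonoidHom := by
  have hcomp : (MulAut.conj t).toMonoidHom.comp (innerHom Q) =
      (innerHom Q).comp (t : MulAut A).toMonoidHom :=
    MonoidHom.ext fun a => (innerHom_apply_apply t a).symm
  rw [Subgroup.map_map, hcomp, ← Subgroup.map_map,
    Subgroup.comap_map_eq_self_of_injective (innerHom_injective h)]

theorem relative_stallings_general {κ : Type v} [Finite κ] (K : κ → Subgroup A) (B : Subgroup A)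
    (hiso : Function.Bijective
      (Monoid.CoprodI.lift fun o : Option κ => (o.elim B K).subtype))
    (hnontriv : ∃ o₁ o₂ : Option κ, o₁ ≠ o₂ ∧ o₁.elim B K ≠ ⊥ ∧ o₂.elim B K ≠ ⊥)
    (hB : Group.FG B) (Q : Subgroup (OutG A)) [Finite Q]
    (hpres : ∀ ψ : MulAut A, toOut A ψ ∈ Q → ∀ k, ∃ (o : Option κ) (x : A),
      (K k).map ψ.toMonoidHom = (o.elim B K).map (MulAut.conj x).toMonoidHom) :
    HasFiniteSplitting.{max u v} (Q.comap (toOut A)) fun k => (K k).map (innerHom Q) := by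
  obtain ⟨o₁, o₂, hne, h₁, h₂⟩ := hnontriv
  have hconj := conj_injective_of_lift_bijective hiso hne h₁ h₂
  obtain ⟨C, hC, hC', hadapted⟩ := exists_isAdapted hiso hne h₁ h₂
  have htop := iSup_eq_top_of_lift_surjective hiso.2
  have hinv := isAlmostInvariant_of_iSup_eq_top htop hadapted
  obtain ⟨S, hSB, hS⟩ := (Subgroup.fg_iff B).1 ((Group.fg_iff_subgroup_fg B).1 hB)
  refine hasFiniteSplitting_of_finiteIndex_range (innerHom_injective hconj) hS
    (hSB ▸ (iSup_option_elim B K).symm.trans htop) hC hC' hinv fun k t => ?_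
  obtain ⟨o, x, hx⟩ := hpres t t.2 k
  rw [comap_innerHom_conj hconj, hx]
  exact (hadapted o).map_conj hinv x

theorem countable_of_iSup_fg_eq_top {κ : Type*} [Finite κ] {K : κ → Subgroup A}
    (hK : ∀ k, Group.FG (K k)) (htop : ⨆ k, K k = ⊤) : Countable A := by
  have : Group.FG A := Group.fg_def.2 <| htop ▸ Subgroup.FG.iSup _ fun k =>
    (Group.fg_iff_subgroup_fg _).1 (hK k)
  obtain ⟨α, _, f, hf⟩ := Group.fg_iff_exists_freeGroup_hom_surjective_finite.1 this
  exact hf.countable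

theorem countable_comap_toOut [Countable A] [Finite Q] : Countable (Q.comap (toOut A)) :=
  have : Countable (innerHom Q).range := (innerHom Q).rangeRestrict_surjective.countable
  (Subgroup.groupEquivQuotientProdSubgroup (s := (innerHom Q).range)).injective.countable

end OuterAutomorphism

theorem HasFiniteSplitting.exists_hom_perm.{u, v} {G : Type u} [Group G] {κ : Type v}
    {L : κ → Subgroup G} (h : HasFiniteSplitting.{w} G L) :
    ∃ (W : Type w) (T : SimpleGraph W) (ρ : G →* Equiv.Perm W),
      T.IsTree ∧
      (∀ (g : G) (u v : W), T.Adj (ρ g u) (ρ g v) ↔ T.Adj u v) ∧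
      (∀ (g : G) (u v : W), T.Adj u v → ¬(ρ g u = v ∧ ρ g v = u)) ∧
      (∀ u v x y : W, T.Adj u v → T.Adj x y →
        ∃ g : G, (ρ g u = x ∧ ρ g v = y) ∨ (ρ g u = y ∧ ρ g v = x)) ∧
      (∀ u v : W, T.Adj u v → {g : G | ρ g u = u ∧ ρ g v = v}.Finite) ∧
      (¬ ∃ w : W, ∀ g : G, ρ g w = w) ∧
      (∀ k, ∃ w : W, ∀ g ∈ L k, ρ g w = w) := by
  obtain ⟨W, _, T, hT, hL⟩ := h
  exact ⟨W, T, MulAction.toPermHom G W, hT.isTree, fun g _ _ => hT.adj_smul_iff g,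
    fun g _ _ => hT.not_inversion g, fun _ _ _ _ => hT.exists_smul_edge,
    fun _ _ => hT.finite_edge_stabilizer, hT.no_fixed_vertex, hL⟩

/-- Relative Stallings' theorem.  Given a free product decomposition
`A = A₁ ∗ ⋯ ∗ Aₙ ∗ B` (with all factors finitely generated, at least two of them
nontrivial) preserved by a monomorphism `φ : H → Out(A)` from a finite group `H`,
the preimage `Ā` of `φ(H)` in `Aut(A)` splits over a finite subgroup in such a way
that each `Aᵢ` (viewed in `Ā` via `A ≅ Inn(A)`) is elliptic:  `Ā` acts without
inversions on a tree with a single orbit of edges, finite edge stabilisers,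
no global fixed vertex, and each `Aᵢ` fixes a vertex. -/
theorem relative_stallings
    {A : Type*} [Group A] {n : ℕ} (Ai : Fin n → Subgroup A) (B : Subgroup A)
    -- `A = A₁ ∗ ⋯ ∗ Aₙ ∗ B` :
    (hiso : Function.Bijective
      (Monoid.CoprodI.lift (fun o : Option (Fin n) => (o.elim B Ai).subtype)))
    -- at least two nontrivial factors :
    (hnontriv : ∃ o₁ o₂ : Option (Fin n), o₁ ≠ o₂ ∧
      o₁.elim B Ai ≠ ⊥ ∧ o₂.elim B Ai ≠ ⊥)
    -- all factors finitely generated :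
    (hfgA : ∀ i, Group.FG (Ai i)) (hfgB : Group.FG B)
    -- `φ : H → Out(A)` a monomorphism with finite domain :
    {H : Type*} [Group H] [Finite H] (φ : H →* OutG A)
    (hφ : Function.Injective φ)
    -- the decomposition is preserved by `H` :
    (hpres : ∀ (h : H) (i : Fin n), ∃ j : Fin n, ∀ ψ : MulAut A,
      toOut A ψ = φ h →
      ∃ x : A, (Ai i).map ψ.toMonoidHom = (Ai j).map (MulAut.conj x).toMonoidHom)
    -- `Ā`, the preimage of `φ(H)` in `Aut(A)` :
    (Abar : Subgroup (MulAut A)) (hAbar : Abar = Subgroup.comap (toOut A) φ.range) :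
    ∃ (W : Type) (T : SimpleGraph W) (ρ : Abar →* Equiv.Perm W),
      -- `T` is a tree and `Ā` acts on it by graph automorphisms
      T.IsTree ∧
      (∀ (g : Abar) (u v : W), T.Adj (ρ g u) (ρ g v) ↔ T.Adj u v) ∧
      -- without inversions
      (∀ (g : Abar) (u v : W), T.Adj u v → ¬(ρ g u = v ∧ ρ g v = u)) ∧
      -- a single orbit of edges
      (∀ u v x y : W, T.Adj u v → T.Adj x y →
        ∃ g : Abar, (ρ g u = x ∧ ρ g v = y) ∨ (ρ g u = y ∧ ρ g v = x)) ∧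
      -- finite edge stabilisers
      (∀ u v : W, T.Adj u v → {g : Abar | ρ g u = u ∧ ρ g v = v}.Finite) ∧
      -- no vertex is fixed by all of `Ā` (the splitting is nontrivial)
      (¬ ∃ w : W, ∀ g : Abar, ρ g w = w) ∧
      -- each `Aᵢ`, viewed inside `Ā` via `A ≅ Inn(A)`, fixes a vertex
      (∀ i : Fin n, ∃ w : W, ∀ g : Abar,
        (∃ a ∈ Ai i, (g : MulAut A) = MulAut.conj a) → ρ g w = w) := by
  subst hAbar
  have : Finite φ.range := Set.finite_range φ
  have : Countable A := countable_of_iSup_fg_eq_top (Option.forall.2 ⟨hfgB, hfgA⟩)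
    (iSup_eq_top_of_lift_surjective hiso.2)
  have : Countable (φ.range.comap (toOut A)) := countable_comap_toOut
  have hsplit := relative_stallings_general Ai B hiso hnontriv hfgB φ.range
    fun ψ ⟨h, hh⟩ i => (hpres h i).imp' some fun _ hj => hj ψ hh.symm
  simpa only [mem_map_innerHom] using hsplit.resize.{0}.exists_hom_perm
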